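/- For every nonzero semi-invariant f of the generalized Kronecker quiver, the leading monomial LM(f) is a finite product of leading monomials LM(f_{U^±}) of semi-invariants attached to primitive semi-standard linked tableaux pairs U^±; that is, the semi-invariants of primitive semi-standard linked tableaux pairs form a (possibly infinite) SAGBI basis of the semi-invariant ring. -/

import Mathlib

namespace QuiverSAGBI

/-- The variable `x^i_{jk}`: the `(j,k)` entry of the generic matrix `M_i`. -/
abbrev KVar (K r0 r1 : ℕ) := Fin K × Fin r1 × Fin r0

/-- The coordinate ring of the representation space of the generalized
Kronecker quiver with `K` arrows and dimension vector `(r0, r1)`. -/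
abbrev KPoly (K r0 r1 : ℕ) := MvPolynomial (KVar K r0 r1) ℂ

/-- `x_v` is a greater variable than `x_w`:  `v.1 < w.1`, or `v.1 = w.1` and
`v.2.1 < w.2.1`, or these agree and `v.2.2 < w.2.2`. -/
def VarGT {K r0 r1 : ℕ} (v w : KVar K r0 r1) : Prop :=
  v.1 < w.1 ∨ (v.1 = w.1 ∧ (v.2.1 < w.2.1 ∨ (v.2.1 = w.2.1 ∧ v.2.2 < w.2.2)))

/-- The monomial with exponent vector `a` is smaller than the one with exponent
vector `b` in the lexicographic term order: at the most significant variable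
where they differ, `a` has the smaller exponent. -/
def MonLT {K r0 r1 : ℕ} (a b : KVar K r0 r1 →₀ ℕ) : Prop :=
  ∃ v, a v < b v ∧ ∀ w, VarGT w v → a w = b w

/-- `mo` is the leading monomial (exponent vector) of `f`. -/
def IsLM {K r0 r1 : ℕ} (f : KPoly K r0 r1) (mo : KVar K r0 r1 →₀ ℕ) : Prop :=
  mo ∈ f.support ∧ ∀ m' ∈ f.support, m' = mo ∨ MonLT m' mo

/-- The substitution action of a pair of matrices `(g, h)` on the coordinate
ring: `x^i_{jk} ↦ ∑ (h⁻¹)_{j j'} x^i_{j'k'} g_{k' k}`, i.e. `M_i ↦ h⁻¹ M_i g`. -/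
noncomputable def glAct {K r0 r1 : ℕ} (g : Matrix (Fin r0) (Fin r0) ℂ)
    (h : Matrix (Fin r1) (Fin r1) ℂ) : KPoly K r0 r1 →ₐ[ℂ] KPoly K r0 r1 :=
  MvPolynomial.aeval fun v : KVar K r0 r1 =>
    ∑ j' : Fin r1, ∑ k' : Fin r0,
      MvPolynomial.C (h⁻¹ v.2.1 j' * g k' v.2.2) * MvPolynomial.X (v.1, j', k')

/-- `f` is a semi-invariant of weight `(w0, w1)`. -/
def IsSemiInvariant {K r0 r1 : ℕ} (f : KPoly K r0 r1) (w0 w1 : ℤ) : Prop :=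
  ∀ (g : Matrix (Fin r0) (Fin r0) ℂ) (h : Matrix (Fin r1) (Fin r1) ℂ),
    IsUnit g.det → IsUnit h.det →
      glAct g h f = MvPolynomial.C (g.det ^ w0 * h.det ^ w1) * f

/-- The semi-invariant ring: the linear span of all semi-invariants. -/
noncomputable def semiInvariantRing (K r0 r1 : ℕ) : Submodule ℂ (KPoly K r0 r1) :=
  Submodule.span ℂ {f | ∃ w0 w1 : ℤ, IsSemiInvariant f w0 w1}

/-- A linked tableaux pair for the generalized Kronecker quiver:
`Tm` is the tableau `T⁻` (with `r0` rows and `cm` columns, labels `(i,q)`),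
`Tp` is the tableau `T⁺` (with `r1` rows and `cp` columns, labels `(i,p)`),
and `link` is a bijection of boxes sending the box labeled `(i,q)` in row `p`
of `T⁻` to a box labeled `(i,p)` lying in row `q` of `T⁺`. -/
structure LinkedPair (K r0 r1 cm cp : ℕ) where
  Tm : Fin r0 → Fin cm → Fin K × Fin r1
  Tp : Fin r1 → Fin cp → Fin K × Fin r0
  link : Fin r0 × Fin cm ≃ Fin r1 × Fin cp
  link_row : ∀ p c, (link (p, c)).1 = (Tm p c).2
  link_label : ∀ p c, Tp (link (p, c)).1 (link (p, c)).2 = ((Tm p c).1, p)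

/-- The exponent vector of `Mon(T⁺)`: a box labeled `(i,k)` in row `q` of `T⁺`
contributes the variable `x^i_{qk}`. -/
noncomputable def monExpP {K r0 r1 cm cp : ℕ} (L : LinkedPair K r0 r1 cm cp) :
    KVar K r0 r1 →₀ ℕ :=
  ∑ q : Fin r1, ∑ c : Fin cp, Finsupp.single ((L.Tp q c).1, q, (L.Tp q c).2) 1

/-- The exponent vector of `Mon(T⁻)`: a box labeled `(i,j)` in row `p` of `T⁻`
contributes the variable `x^i_{jp}`. -/
noncomputable def monExpM {K r0 r1 cm cp : ℕ} (L : LinkedPair K r0 r1 cm cp) :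
    KVar K r0 r1 →₀ ℕ :=
  ∑ p : Fin r0, ∑ c : Fin cm, Finsupp.single ((L.Tm p c).1, (L.Tm p c).2, p) 1

/-- The semi-invariant `f_{T^±}` attached to a linked tableaux pair:
`∑_{α⁻, α⁺} sign(α⁻) sign(α⁺) Mon(α⁻ · α⁺ · T⁺)`, where `α⁺` permutes the
entries of each column of `T⁺` among its rows and `α⁻` permutes the second
entries of the labels of the boxes of `T⁺` linked to each column of `T⁻`. -/
noncomputable def pairPoly {K r0 r1 cm cp : ℕ} (L : LinkedPair K r0 r1 cm cp) :
    KPoly K r0 r1 :=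
  ∑ αm : Fin cm → Equiv.Perm (Fin r0), ∑ αp : Fin cp → Equiv.Perm (Fin r1),
    ((∏ l, (Equiv.Perm.sign (αm l) : ℤ)) * ∏ c, (Equiv.Perm.sign (αp c) : ℤ)) •
      ∏ p : Fin r0, ∏ l : Fin cm,
        MvPolynomial.X
          ((L.Tm p l).1, αp (L.link (p, l)).2 (L.link (p, l)).1, αm l p)

/-- The order on labels: `(i,p) ≤ (j,q)` iff `i < j`, or `i = j` and `p ≤ q`. -/
def LabelLE {K n : ℕ} (a b : Fin K × Fin n) : Prop :=
  a.1 < b.1 ∨ (a.1 = b.1 ∧ a.2 ≤ b.2)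

/-- Strict version of the label order. -/
def LabelLT {K n : ℕ} (a b : Fin K × Fin n) : Prop :=
  a.1 < b.1 ∨ (a.1 = b.1 ∧ a.2 < b.2)

/-- A rectangular tableau is semi-standard if its entries are weakly increasing
along each row and strictly increasing down each column. -/
def IsSemiStandardTab {rows cols K n : ℕ}
    (T : Fin rows → Fin cols → Fin K × Fin n) : Prop :=
  (∀ (i : Fin rows) (c c' : Fin cols), c ≤ c' → LabelLE (T i c) (T i c')) ∧
  (∀ (c : Fin cols) (i i' : Fin rows), i < i' → LabelLT (T i c) (T i' c))

/-- The link is semi-standard: boxes with equal labels in the same row of `T⁻`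
are matched with their partners in `T⁺` in a left-to-right
order-preserving way. -/
def IsSemiStandardLink {K r0 r1 cm cp : ℕ}
    (L : LinkedPair K r0 r1 cm cp) : Prop :=
  ∀ (p : Fin r0) (c c' : Fin cm), L.Tm p c = L.Tm p c' → c < c' →
    (L.link (p, c)).2 < (L.link (p, c')).2

/-- A semi-standard linked tableaux pair: both tableaux and the link are
semi-standard. -/
def IsSemiStandardPair {K r0 r1 cm cp : ℕ}
    (L : LinkedPair K r0 r1 cm cp) : Prop :=
  IsSemiStandardTab L.Tm ∧ IsSemiStandardTab L.Tp ∧ IsSemiStandardLink L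

/-- A (nonempty) semi-standard linked tableaux pair is primitive if its leading
monomial is not the product of the leading monomials of two (nonempty)
semi-standard linked tableaux pairs. -/
def IsPrimitive {K r0 r1 cm cp : ℕ} (L : LinkedPair K r0 r1 cm cp) : Prop :=
  IsSemiStandardPair L ∧ 0 < cm ∧
    ¬∃ (cm1 cp1 cm2 cp2 : ℕ) (L1 : LinkedPair K r0 r1 cm1 cp1)
        (L2 : LinkedPair K r0 r1 cm2 cp2) (m m1 m2 : KVar K r0 r1 →₀ ℕ),
        0 < cm1 ∧ 0 < cm2 ∧ IsSemiStandardPair L1 ∧ IsSemiStandardPair L2 ∧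
        IsLM (pairPoly L) m ∧ IsLM (pairPoly L1) m1 ∧ IsLM (pairPoly L2) m2 ∧
        m = m1 + m2

section
open Finset
set_option linter.unusedSectionVars false


lemma fiber_le {β : Type*} (s : Finset β) (l : β → ℕ) (p p' : β → ℕ) (P : ℕ)
    (h : ∀ L, #{b ∈ s | l b = L ∧ p' b < P} ≤ #{b ∈ s | l b = L ∧ p b < P})
    (X : ℕ → Prop) [DecidablePred X] :
    #{b ∈ s | X (l b) ∧ p' b < P} ≤ #{b ∈ s | X (l b) ∧ p b < P} := by
  classical
  rw [Finset.card_eq_sum_card_fiberwise (f := l) (t := s.image l),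
    Finset.card_eq_sum_card_fiberwise (f := l) (t := s.image l)]
  · apply Finset.sum_le_sum
    intro L _
    by_cases hX : X L
    · have e : ∀ g : β → ℕ, {b ∈ {b ∈ s | X (l b) ∧ g b < P} | l b = L} =
          {b ∈ s | l b = L ∧ g b < P} := by
        intro g
        ext b; simp only [mem_filter]; constructor
        · rintro ⟨⟨h1, h2, h3⟩, h4⟩; exact ⟨h1, h4, h3⟩
        · rintro ⟨h1, rfl, h3⟩; exact ⟨⟨h1, hX, h3⟩, rfl⟩
      rw [e, e]; exact h L
    · have : #{b ∈ {b ∈ s | X (l b) ∧ p' b < P} | l b = L} = 0 := by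
        rw [Finset.card_eq_zero, Finset.filter_eq_empty_iff]
        intro b hb hL
        simp only [mem_filter] at hb
        exact hX (hL ▸ hb.2.1)
      rw [this]; exact Nat.zero_le _
  · intro b hb; simp only [coe_filter, Set.mem_ofPred_eq] at hb
    exact Finset.mem_coe.2 (mem_image_of_mem _ hb.1)
  · intro b hb; simp only [coe_filter, Set.mem_ofPred_eq] at hb
    exact Finset.mem_coe.2 (mem_image_of_mem _ hb.1)

/-- The matching inequality, with a description of the tight case. -/
lemma dom_aux {β : Type*} (s : Finset β) (p l q c p' q' : β → ℕ) (Q P : ℕ)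
    (hCm : ∀ b ∈ s, ∀ b2 ∈ s, l b = l b2 → p b ≤ p b2 → q b + p b2 ≤ q b2 + p b)
    (hCp : ∀ b ∈ s, ∀ b2 ∈ s, c b = c b2 → q b ≤ q b2 → p b + q b2 ≤ p b2 + q b)
    (hm : ∀ L, #{b ∈ s | l b = L ∧ p' b < P} ≤ #{b ∈ s | l b = L ∧ p b < P})
    (hp : ∀ L, #{b ∈ s | c b = L ∧ q' b < Q} ≤ #{b ∈ s | c b = L ∧ q b < Q}) :
    #{b ∈ s | q' b < Q ∧ p' b < P} ≤ #{b ∈ s | q b < Q ∧ p b < P} ∧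
    (#{b ∈ s | q' b < Q ∧ p' b < P} = #{b ∈ s | q b < Q ∧ p b < P} →
      ∀ b ∈ s, P ≤ p' b → q' b < Q → ∃ e ∈ s, l e = l b ∧ P ≤ p e ∧ q e + P < Q + p e) := by
  classical
  set X : ℕ → Prop := fun L => ∃ e ∈ s, l e = L ∧ P ≤ p e ∧ q e + P < Q + p e with hX
  set Y : ℕ → Prop := fun C => ∀ e ∈ s, c e = C → q e < Q → Q + p e ≤ q e + P with hY
  have f1 := fiber_le s l p p' P hm X
  have f2 := fiber_le s c q q' Q hp Y
  set S1 := {b ∈ s | X (l b) ∧ p' b < P}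
  set S2 := {b ∈ s | Y (c b) ∧ q' b < Q}
  set S3 := {b ∈ s | ¬ X (l b) ∧ ¬ Y (c b)}
  set M1 := {b ∈ s | X (l b) ∧ p b < P}
  set M2 := {b ∈ s | Y (c b) ∧ q b < Q}
  have d12 : Disjoint M1 M2 := by
    rw [Finset.disjoint_left]
    intro b hb1 hb2
    simp only [M1, M2, mem_filter] at hb1 hb2
    obtain ⟨hbs, ⟨e, he, hle, hPe, hqe⟩, hpb⟩ := hb1
    have h1 := hCm b hbs e he hle.symm (by omega)
    have h2 := hb2.2.1 b hbs rfl hb2.2.2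
    omega
  have d3 : Disjoint (M1 ∪ M2) S3 := by
    rw [Finset.disjoint_left]
    intro b hb1 hb2
    simp only [M1, M2, S3, mem_filter, mem_union] at hb1 hb2
    revert hb1 hb2
    generalize X (l b) = x
    generalize Y (c b) = y
    tauto
  have hsub : M1 ∪ M2 ∪ S3 ⊆ {b ∈ s | q b < Q ∧ p b < P} := by
    intro b hb
    simp only [M1, M2, S3, mem_filter, mem_union] at hb ⊢
    rcases hb with (⟨hbs, ⟨e, he, hle, hPe, hqe⟩, hpb⟩ | ⟨hbs, hYb, hqb⟩) | ⟨hbs, hXb, hYb⟩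
    · have h1 := hCm b hbs e he hle.symm (by omega)
      exact ⟨hbs, by omega, hpb⟩
    · have := hYb b hbs rfl hqb
      exact ⟨hbs, hqb, by omega⟩
    · simp only [hY, not_forall, not_le] at hYb
      obtain ⟨f, hf, hcf, hqf, hlt⟩ := hYb
      have hX' : ∀ e ∈ s, l e = l b → P ≤ p e → Q + p e ≤ q e + P := by
        intro e he h1 h2
        by_contra h3
        exact hXb ⟨e, he, h1, h2, by omega⟩
      have hqQ : q b < Q := by
        by_contra hq
        have h1 := hCp f hf b hbs hcf (by omega)
        have := hX' b hbs rfl (by omega)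
        omega
      refine ⟨hbs, hqQ, ?_⟩
      by_contra hpP
      have := hX' b hbs rfl (by omega)
      omega
  have hc := Finset.card_le_card hsub
  rw [Finset.card_union_of_disjoint d3, Finset.card_union_of_disjoint d12] at hc
  have hsub2 : {b ∈ s | q' b < Q ∧ p' b < P} ⊆ S1 ∪ S2 ∪ S3 := by
    intro b hb
    simp only [S1, S2, S3, mem_filter, mem_union] at hb ⊢
    revert hb
    generalize X (l b) = x
    generalize Y (c b) = y
    tauto
  have hu : #(S1 ∪ S2 ∪ S3) ≤ #S1 + #S2 + #S3 :=
    (Finset.card_union_le _ _).trans (Nat.add_le_add_right (Finset.card_union_le _ _) _)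
  refine ⟨(Finset.card_le_card hsub2).trans (by omega), ?_⟩
  intro heq b hb hPb hQb
  by_contra hne
  have hXb : ¬ X (l b) := hne
  have : {b ∈ s | q' b < Q ∧ p' b < P} ⊂ S1 ∪ S2 ∪ S3 := by
    refine (Finset.ssubset_iff_of_subset hsub2).2 ⟨b, ?_, ?_⟩
    · simp only [S1, S2, S3, mem_filter, mem_union]
      revert hXb
      generalize X (l b) = x
      generalize Y (c b) = y
      tauto
    · simp only [mem_filter]; omega
  have := Finset.card_lt_card this
  omega

/-- Inside one column, permuting boxes cannot push more boxes with small `i` to the top. -/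
lemma col_le {β : Type*} [Fintype β] (i p l : β → ℕ) (τ : Equiv.Perm β)
    (hτ : ∀ b, l (τ b) = l b)
    (hM : ∀ b b2, l b = l b2 → p b ≤ p b2 → i b ≤ i b2) (L I P : ℕ)
    : #{b | l b = L ∧ i b ≤ I ∧ p (τ b) < P} ≤ #{b | l b = L ∧ i b ≤ I ∧ p b < P} := by
  classical
  by_cases h : ∀ b, l b = L → i b ≤ I → p b < P
  · apply Finset.card_le_card
    intro b hb
    simp only [mem_filter, mem_univ, true_and] at hb ⊢
    exact ⟨hb.1, hb.2.1, h b hb.1 hb.2.1⟩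
  · push Not at h
    obtain ⟨r, hr, hir, hpr⟩ := h
    apply Finset.card_le_card_of_injOn τ
    · intro b hb
      simp only [coe_filter, mem_univ, true_and, Set.mem_ofPred_eq] at hb ⊢
      refine ⟨by rw [hτ, hb.1], ?_, hb.2.2⟩
      exact (hM (τ b) r (by rw [hτ, hb.1, hr]) (by omega)).trans hir
    · exact τ.injective.injOn

lemma col_step {β : Type*} [Fintype β] (i p l : β → ℕ) (τ : Equiv.Perm β)
    (hτ : ∀ b, l (τ b) = l b)
    (hM : ∀ b b2, l b = l b2 → p b ≤ p b2 → i b ≤ i b2) (I : ℕ)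
    (hI : ∀ I' < I, ∀ P, #{b | i b = I' ∧ p (τ b) < P} = #{b | i b = I' ∧ p b < P}) :
    ∀ L P, #{b ∈ ({b | i b = I} : Finset β) | l b = L ∧ p (τ b) < P} ≤
      #{b ∈ ({b | i b = I} : Finset β) | l b = L ∧ p b < P} := by
  classical
  induction I using Nat.strong_induction_on with
  | _ I ih =>
  intro L P
  have key : ∀ I' < I, #{b | (l b = L ∧ p (τ b) < P) ∧ i b = I'} =
      #{b | (l b = L ∧ p b < P) ∧ i b = I'} := by
    intro I' hI'
    have hle := ih I' hI' (fun J hJ => hI J (hJ.trans hI'))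
    have htot := hI I' hI' P
    have e1 : #{b | i b = I' ∧ p (τ b) < P} = ∑ L ∈ univ.image l,
        #{b ∈ ({b | i b = I'} : Finset β) | l b = L ∧ p (τ b) < P} := by
      rw [Finset.card_eq_sum_card_fiberwise (f := l) (t := univ.image l)
        (fun b _ => Finset.mem_coe.2 (mem_image_of_mem _ (mem_univ _)))]
      refine sum_congr rfl fun L _ => congrArg card ?_
      ext b; simp only [mem_filter, mem_univ, true_and]; tauto
    have e2 : #{b | i b = I' ∧ p b < P} = ∑ L ∈ univ.image l,
        #{b ∈ ({b | i b = I'} : Finset β) | l b = L ∧ p b < P} := by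
      rw [Finset.card_eq_sum_card_fiberwise (f := l) (t := univ.image l)
        (fun b _ => Finset.mem_coe.2 (mem_image_of_mem _ (mem_univ _)))]
      refine sum_congr rfl fun L _ => congrArg card ?_
      ext b; simp only [mem_filter, mem_univ, true_and]; tauto
    rw [e1, e2, Finset.sum_eq_sum_iff_of_le (fun L _ => hle L P)] at htot
    by_cases hL : L ∈ univ.image l
    · convert htot L hL using 2 <;>
      · ext b; simp only [mem_filter, mem_univ, true_and]; tauto
    · have : ∀ b, l b ≠ L := fun b hb => hL (hb ▸ mem_image_of_mem _ (mem_univ _))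
      simp [this]
  have tot := col_le i p l τ hτ hM L I P
  have split : ∀ g : β → ℕ, #{b | l b = L ∧ i b ≤ I ∧ g b < P} =
      ∑ J ∈ Finset.range (I+1), #{b | (l b = L ∧ g b < P) ∧ i b = J} := by
    intro g
    rw [Finset.card_eq_sum_card_fiberwise (f := i) (t := Finset.range (I+1))]
    · refine sum_congr rfl fun J hJ => congrArg card ?_
      rw [mem_range] at hJ
      ext b; simp only [mem_filter, mem_univ, true_and]
      constructor
      · rintro ⟨⟨a, b, c⟩, d⟩; exact ⟨⟨a, c⟩, d⟩
      · rintro ⟨⟨a, c⟩, d⟩; exact ⟨⟨a, by omega, c⟩, d⟩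
    · intro b hb
      simp only [coe_filter, mem_univ, true_and, Set.mem_ofPred_eq] at hb
      simp only [coe_range, Set.mem_Iio]; omega
  rw [split, split, Finset.sum_range_succ, Finset.sum_range_succ,
    Finset.sum_congr rfl (fun J hJ => key J (mem_range.1 hJ))] at tot
  have tot' := Nat.le_of_add_le_add_left tot
  convert tot' using 2 <;>
  · ext b; simp only [mem_filter, mem_univ, true_and]; tauto


lemma fib_eq {β γ : Type*} [DecidableEq γ] (s : Finset β) (g g' : β → γ) (φ : γ → Prop) [DecidablePred φ]
    (h : ∀ x, φ x → #{b ∈ s | g' b = x} = #{b ∈ s | g b = x}) :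
    #{b ∈ s | φ (g' b)} = #{b ∈ s | φ (g b)} := by
  classical
  have e : ∀ k : β → γ, (∀ b, b ∈ s → k b ∈ s.image g ∪ s.image g') → #{b ∈ s | φ (k b)} =
      ∑ x ∈ (s.image g ∪ s.image g').filter φ, #{b ∈ s | k b = x} := by
    intro k hk
    rw [Finset.card_eq_sum_card_fiberwise (f := k) (t := (s.image g ∪ s.image g').filter φ)]
    · refine sum_congr rfl fun x hx => congrArg card ?_
      rw [mem_filter] at hx
      ext b; simp only [mem_filter]
      constructor
      · rintro ⟨⟨h1, h2⟩, h3⟩; exact ⟨h1, h3⟩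
      · rintro ⟨h1, rfl⟩; exact ⟨⟨h1, hx.2⟩, rfl⟩
    · intro b hb
      simp only [coe_filter, Set.mem_ofPred_eq] at hb ⊢
      exact ⟨hk b hb.1, hb.2⟩
  rw [e g (fun b hb => mem_union_left _ (mem_image_of_mem _ hb)),
    e g' (fun b hb => mem_union_right _ (mem_image_of_mem _ hb))]
  exact sum_congr rfl fun x hx => h x (mem_filter.1 hx).2

/-- Combinatorial data of a linked pair, in terms of its set of boxes. -/
structure BoxData (β : Type) where
  i : β → ℕ
  p : β → ℕ
  l : β → ℕ
  q : β → ℕ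
  c : β → ℕ
  hiM : ∀ b b2, l b = l b2 → p b ≤ p b2 → i b ≤ i b2
  hiP : ∀ b b2, c b = c b2 → q b ≤ q b2 → i b ≤ i b2
  hCM : ∀ b b2, i b = i b2 → l b = l b2 → p b ≤ p b2 → q b + p b2 ≤ q b2 + p b
  hCP : ∀ b b2, i b = i b2 → c b = c b2 → q b ≤ q b2 → p b + q b2 ≤ p b2 + q b
  injM : ∀ b b2, l b = l b2 → p b = p b2 → b = b2
  injP : ∀ b b2, c b = c b2 → q b = q b2 → b = b2
  link : ∀ b b2, i b = i b2 → p b = p b2 → q b = q b2 → l b < l b2 → c b < c b2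

/-- Exchange the roles of the two tableaux. -/
def BoxData.swap {β : Type} (B : BoxData β) : BoxData β where
  i := B.i
  p := B.q
  l := B.c
  q := B.p
  c := B.l
  hiM := B.hiP
  hiP := B.hiM
  hCM := B.hCP
  hCP := B.hCM
  injM := B.injP
  injP := B.injM
  link := by
    intro b b2 hi hq hp hc
    rcases lt_trichotomy (B.l b) (B.l b2) with h | h | h
    · exact h
    · have := B.injM b b2 h hp
      subst this; exact absurd hc (lt_irrefl _)
    · have := B.link b2 b hi.symm hp.symm hq.symm h
      omega

section
variable {β : Type} [Fintype β] (B : BoxData β) (τm τp : Equiv.Perm β)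

/-- number of boxes with prescribed variable after permuting. -/
def nn (I Q P : ℕ) : ℕ :=
  #{b ∈ ({b | B.i b = I} : Finset β) | (B.q (τp b), B.p (τm b)) = (Q, P)}

lemma lt_of_first (hτm : ∀ b, B.l (τm b) = B.l b) (hτp : ∀ b, B.c (τp b) = B.c b)
    (I Q P : ℕ)
    (hI : ∀ I' < I, ∀ Q P, nn B τm τp I' Q P = nn B 1 1 I' Q P) :
    #{b ∈ ({b | B.i b = I} : Finset β) | B.q (τp b) < Q ∧ B.p (τm b) < P} ≤
      #{b ∈ ({b | B.i b = I} : Finset β) | B.q b < Q ∧ B.p b < P} ∧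
    (#{b ∈ ({b | B.i b = I} : Finset β) | B.q (τp b) < Q ∧ B.p (τm b) < P} =
      #{b ∈ ({b | B.i b = I} : Finset β) | B.q b < Q ∧ B.p b < P} →
      ∀ b, B.i b = I → P ≤ B.p (τm b) → B.q (τp b) < Q →
        ∃ e, B.i e = I ∧ B.l e = B.l b ∧ P ≤ B.p e ∧ B.q e + P < Q + B.p e) := by
  classical
  have hm := col_step B.i B.p B.l τm hτm B.hiM I (fun I' hI' P => by
    have := fib_eq ({b | B.i b = I'} : Finset β) (fun b => (B.q b, B.p b))
      (fun b => (B.q (τp b), B.p (τm b))) (fun x => x.2 < P) (fun x _ => hI I' hI' x.1 x.2)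
    simpa [Finset.filter_filter] using this)
  have hp := col_step B.i B.q B.c τp hτp B.hiP I (fun I' hI' P => by
    have := fib_eq ({b | B.i b = I'} : Finset β) (fun b => (B.q b, B.p b))
      (fun b => (B.q (τp b), B.p (τm b))) (fun x => x.1 < P) (fun x _ => hI I' hI' x.1 x.2)
    simpa [Finset.filter_filter] using this)
  have := dom_aux ({b | B.i b = I} : Finset β) B.p B.l B.q B.c (fun b => B.p (τm b))
    (fun b => B.q (τp b)) Q P
    (fun b hb b2 hb2 => B.hCM b b2 (by simp at hb hb2; omega))
    (fun b hb b2 hb2 => B.hCP b b2 (by simp at hb hb2; omega))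
    (fun L => hm L P) (fun L => hp L Q)
  simpa using this

lemma exists_first (hτm : ∀ b, B.l (τm b) = B.l b) (hτp : ∀ b, B.c (τp b) = B.c b)
    (hne : ∃ I Q P, nn B τm τp I Q P ≠ nn B 1 1 I Q P) :
    ∃ I Q P, nn B τm τp I Q P < nn B 1 1 I Q P ∧
      ∀ I2 Q2 P2, (I2 < I ∨ (I2 = I ∧ (Q2 < Q ∨ (Q2 = Q ∧ P2 < P)))) →
        nn B τm τp I2 Q2 P2 = nn B 1 1 I2 Q2 P2 := by
  classical
  let S : Set (ℕ ×ₗ ℕ ×ₗ ℕ) := {x | nn B τm τp (ofLex x).1 (ofLex (ofLex x).2).1 (ofLex (ofLex x).2).2 ≠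
    nn B 1 1 (ofLex x).1 (ofLex (ofLex x).2).1 (ofLex (ofLex x).2).2}
  obtain ⟨I0, Q0, P0, h0⟩ := hne
  have hS : S.Nonempty := ⟨toLex (I0, toLex (Q0, P0)), h0⟩
  obtain ⟨x, hx, hmin⟩ := (wellFounded_lt : WellFounded (α := ℕ ×ₗ ℕ ×ₗ ℕ) (· < ·)).has_min S hS
  set I := (ofLex x).1
  set Q := (ofLex (ofLex x).2).1
  set P := (ofLex (ofLex x).2).2
  have hlow : ∀ I2 Q2 P2, (I2 < I ∨ (I2 = I ∧ (Q2 < Q ∨ (Q2 = Q ∧ P2 < P)))) →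
        nn B τm τp I2 Q2 P2 = nn B 1 1 I2 Q2 P2 := by
    intro I2 Q2 P2 h
    by_contra hc
    refine hmin (toLex (I2, toLex (Q2, P2))) hc ?_
    rw [Prod.Lex.lt_iff, Prod.Lex.lt_iff]
    exact h
  refine ⟨I, Q, P, ?_, hlow⟩
  have hle := (lt_of_first B τm τp hτm hτp I (Q+1) (P+1)
    (fun I' hI' Q P => hlow _ _ _ (Or.inl hI'))).1
  have hx' : nn B τm τp I Q P ≠ nn B 1 1 I Q P := hx
  refine lt_of_le_of_ne ?_ hx'
  have split : ∀ σm σp : Equiv.Perm β,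
      #{b ∈ ({b | B.i b = I} : Finset β) | B.q (σp b) < Q + 1 ∧ B.p (σm b) < P + 1} =
      nn B σm σp I Q P + #{b ∈ ({b | B.i b = I} : Finset β) |
        (fun x : ℕ × ℕ => (x.1 < Q + 1 ∧ x.2 < P + 1) ∧ x ≠ (Q, P)) (B.q (σp b), B.p (σm b))} := by
    intro σm σp
    rw [nn, ← Finset.card_union_of_disjoint]
    · congr 1
      ext b
      simp only [mem_filter, mem_union, mem_univ, true_and, Prod.mk.injEq, ne_eq]
      by_cases h1 : B.q (σp b) = Q <;> by_cases h2 : B.p (σm b) = P <;> simp [h1, h2]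
    · rw [Finset.disjoint_left]
      intro b h1 h2
      simp only [mem_filter] at h1 h2
      exact h2.2.2 h1.2
  have s1 := split τm τp
  have s2 := split 1 1
  have s3 := fib_eq ({b | B.i b = I} : Finset β)
      (fun b => (B.q ((1 : Equiv.Perm β) b), B.p ((1 : Equiv.Perm β) b)))
      (fun b => (B.q (τp b), B.p (τm b)))
      (fun x : ℕ × ℕ => (x.1 < Q + 1 ∧ x.2 < P + 1) ∧ x ≠ (Q, P)) ?_
  · exact Nat.le_of_add_le_add_right ((s1.symm.trans_le (hle.trans_eq s2)).trans_eq
      (congrArg (nn B 1 1 I Q P + ·) s3.symm))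
  · rintro ⟨Q2, P2⟩ ⟨⟨h1, h2⟩, h3⟩
    apply hlow I Q2 P2
    right
    refine ⟨rfl, ?_⟩
    simp only [ne_eq, Prod.mk.injEq] at h1 h2 h3
    omega


lemma col_eq {β : Type} [Fintype β] (i p l : β → ℕ) (τ : Equiv.Perm β)
    (hτ : ∀ b, l (τ b) = l b)
    (hM : ∀ b b2, l b = l b2 → p b ≤ p b2 → i b ≤ i b2)
    (hI : ∀ I', ∀ P, #{b | i b = I' ∧ p (τ b) < P} = #{b | i b = I' ∧ p b < P}) (I L P : ℕ) :
    #{b | i b = I ∧ l b = L ∧ p (τ b) < P} = #{b | i b = I ∧ l b = L ∧ p b < P} := by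
  classical
  have hle := col_step i p l τ hτ hM I (fun I' _ => hI I')
  have htot := hI I P
  have e1 : ∀ g : β → ℕ, #{b | i b = I ∧ g b < P} = ∑ L ∈ univ.image l,
      #{b ∈ ({b | i b = I} : Finset β) | l b = L ∧ g b < P} := by
    intro g
    rw [Finset.card_eq_sum_card_fiberwise (f := l) (t := univ.image l)
      (fun b _ => Finset.mem_coe.2 (mem_image_of_mem _ (mem_univ _)))]
    refine sum_congr rfl fun L _ => congrArg card ?_
    ext b; simp only [mem_filter, mem_univ, true_and]; tauto
  rw [e1, e1, Finset.sum_eq_sum_iff_of_le (fun L _ => hle L P)] at htot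
  by_cases hL : L ∈ univ.image l
  · simpa [Finset.filter_filter] using htot L hL
  · have : ∀ b, l b ≠ L := fun b hb => hL (hb ▸ mem_image_of_mem _ (mem_univ _))
    simp [this]

lemma tm_i (hτm : ∀ b, B.l (τm b) = B.l b)
    (heq : ∀ I Q P, nn B τm τp I Q P = nn B 1 1 I Q P) (b : β) :
    B.i (τm b) = B.i b := by
  classical
  have hc := col_eq B.i B.p B.l τm hτm B.hiM (fun I' P => by
    have := fib_eq ({b | B.i b = I'} : Finset β) (fun b => (B.q b, B.p b))
      (fun b => (B.q (τp b), B.p (τm b))) (fun x => x.2 < P) (fun x _ => heq I' x.1 x.2)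
    simpa [Finset.filter_filter] using this)
  by_contra hne
  have h1 := hc (B.i b) (B.l b) (B.p (τm b))
  have h2 := hc (B.i b) (B.l b) (B.p (τm b) + 1)
  have h3 : #{b' | B.i b' = B.i b ∧ B.l b' = B.l b ∧ B.p b' < B.p (τm b) + 1} ≤
      #{b' | B.i b' = B.i b ∧ B.l b' = B.l b ∧ B.p b' < B.p (τm b)} := by
    apply card_le_card
    intro e he
    simp only [mem_filter, mem_univ, true_and] at he ⊢
    refine ⟨he.1, he.2.1, ?_⟩
    by_contra hlt
    have : e = τm b := B.injM _ _ (by rw [hτm, he.2.1]) (by omega)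
    subst this
    exact hne he.1
  have h4 : #{b' | B.i b' = B.i b ∧ B.l b' = B.l b ∧ B.p (τm b') < B.p (τm b)} <
      #{b' | B.i b' = B.i b ∧ B.l b' = B.l b ∧ B.p (τm b') < B.p (τm b) + 1} := by
    apply card_lt_card
    rw [Finset.ssubset_iff_of_subset]
    · refine ⟨b, ?_, ?_⟩ <;> simp
    · intro e he
      simp only [mem_filter, mem_univ, true_and] at he ⊢
      omega
  omega

lemma tm_row (hτm : ∀ b, B.l (τm b) = B.l b) (hτp : ∀ b, B.c (τp b) = B.c b)
    (heq : ∀ I Q P, nn B τm τp I Q P = nn B 1 1 I Q P) (b : β) :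
    B.q (τm b) = B.q (τp b) := by
  classical
  have hle : ∀ b ∈ (univ : Finset β), B.q (τm b) ≤ B.q (τp b) := by
    intro b _
    have h1 := (lt_of_first B τm τp hτm hτp (B.i b) (B.q (τp b) + 1) (B.p (τm b))
      (fun I' _ => heq I')).2
      (by
        have := fib_eq ({b' | B.i b' = B.i b} : Finset β) (fun b => (B.q b, B.p b))
          (fun b => (B.q (τp b), B.p (τm b)))
          (fun x => x.1 < B.q (τp b) + 1 ∧ x.2 < B.p (τm b)) (fun x _ => heq _ x.1 x.2)
        exact this)
      b rfl le_rfl (Nat.lt_succ_self _)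
    obtain ⟨e, he, hl, hp, hlt⟩ := h1
    have h2 := B.hCM (τm b) e (by rw [tm_i B τm τp hτm heq b, he]) (by rw [hτm, hl]) hp
    omega
  have hsum : ∑ b, B.q (τm b) = ∑ b, B.q (τp b) := by
    rw [Equiv.sum_comp τm B.q, Equiv.sum_comp τp B.q]
  exact (Finset.sum_eq_sum_iff_of_le hle).1 hsum b (mem_univ _)

lemma nn_swap (I Q P : ℕ) : nn B.swap τp τm I P Q = nn B τm τp I Q P := by
  classical
  unfold nn
  apply congrArg card
  ext b
  simp only [mem_filter, mem_univ, true_and, Prod.mk.injEq]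
  exact and_congr Iff.rfl And.comm

lemma tau_eq (hτm : ∀ b, B.l (τm b) = B.l b) (hτp : ∀ b, B.c (τp b) = B.c b)
    (heq : ∀ I Q P, nn B τm τp I Q P = nn B 1 1 I Q P) : τm = τp := by
  classical
  have heq' : ∀ I Q P, nn B.swap τp τm I Q P = nn B.swap 1 1 I Q P := by
    intro I Q P
    rw [nn_swap, nn_swap, heq]
  have i1 := tm_i B τm τp hτm heq
  have i2 : ∀ b, B.i (τp b) = B.i b := tm_i B.swap τp τm hτp heq'
  have q1 := tm_row B τm τp hτm hτp heq
  have p1 : ∀ b, B.p (τp b) = B.p (τm b) := tm_row B.swap τp τm hτp hτm heq'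
  -- the label-preserving permutation
  set σ : Equiv.Perm β := τp⁻¹.trans τm with hσ
  have hσa : ∀ b, σ (τp b) = τm b := by intro b; simp [hσ]
  have cls : ∀ b, B.i (σ b) = B.i b ∧ B.p (σ b) = B.p b ∧ B.q (σ b) = B.q b := by
    intro b
    obtain ⟨a, rfl⟩ := τp.surjective b
    rw [hσa]
    exact ⟨by rw [i1, i2], (p1 a).symm, q1 a⟩
  -- an injective numbering of classes
  obtain ⟨N, hN⟩ : ∃ N : ℕ × ℕ × ℕ → ℕ, Function.Injective N := ⟨Encodable.encode, Encodable.encode_injective⟩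
  let k : β → ℕ := fun b => N (B.i b, B.p b, B.q b)
  have hk : ∀ b, k (σ b) = k b := by
    intro b; simp only [k, (cls b).1, (cls b).2.1, (cls b).2.2]
  have hkk : ∀ b b2, k b = k b2 → B.i b = B.i b2 ∧ B.p b = B.p b2 ∧ B.q b = B.q b2 := by
    intro b b2 h
    have := hN h
    simpa using this
  let M : ℕ := ∑ b, (B.l b + B.c b) + 1
  have hM : ∀ b, B.l b + B.c b < M := fun b =>
    Nat.lt_succ_of_le (Finset.single_le_sum (f := fun b => B.l b + B.c b) (fun _ _ => Nat.zero_le _) (mem_univ b))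
  let f : β → ℕ := fun b => B.l b + k b * M
  let g : β → ℕ := fun b => B.c b + k b * M
  have hkM : ∀ b b2, k b < k b2 → k b * M + M ≤ k b2 * M := by
    intro b b2 h
    have := Nat.mul_le_mul_right M (Nat.succ_le_of_lt h)
    rwa [Nat.succ_mul] at this
  have hfg : ∀ b b2, f b < f b2 → g b < g b2 := by
    intro b b2 h
    rcases lt_trichotomy (k b) (k b2) with h1 | h1 | h1
    · have := hkM _ _ h1; have := hM b; simp only [g]; omega
    · obtain ⟨a1, a2, a3⟩ := hkk _ _ h1
      have := B.link b b2 a1 a2 a3 (by simp only [f, h1] at h; omega)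
      simp only [g, h1]; omega
    · have := hkM _ _ h1; have := hM b2; simp only [f] at h; omega
  have hfinj : Function.Injective f := by
    intro b b2 h
    rcases lt_trichotomy (k b) (k b2) with h1 | h1 | h1
    · have := hkM _ _ h1; have := hM b; simp only [f] at h; omega
    · obtain ⟨a1, a2, a3⟩ := hkk _ _ h1
      exact B.injM b b2 (by simp only [f, h1] at h; omega) a2
    · have := hkM _ _ h1; have := hM b2; simp only [f] at h; omega
  have hmono : Monovary f g := by
    intro b b2 h
    by_contra h2
    have := hfg b2 b (not_le.1 h2)
    omega
  have hS : ∑ b, f (σ b) * g b = ∑ b, f b * g b := by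
    rw [← Equiv.sum_comp τp (fun b => f (σ b) * g b)]
    have e1 : ∀ b, f (σ (τp b)) * g (τp b) =
        B.l b * B.c b + (k (τp b) * M) * (B.l (τm b) + B.c (τp b)) + (k (τp b) * M) * (k (τp b) * M) := by
      intro b
      have : k (τm b) = k (τp b) := by rw [← hσa, hk]
      simp only [hσa, f, g, this]
      rw [← hτm b, ← hτp b]; ring
    have e2 : ∀ b, f b * g b =
        B.l b * B.c b + (k b * M) * (B.l b + B.c b) + (k b * M) * (k b * M) := by
      intro b; simp only [f, g]; ring
    simp only [e1, e2, Finset.sum_add_distrib, mul_add]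
    have a1 : ∑ b, k (τp b) * M * B.l (τm b) = ∑ b, k b * M * B.l b := by
      rw [← Equiv.sum_comp τm (fun b => k b * M * B.l b)]
      refine sum_congr rfl fun b _ => ?_
      rw [← hσa, hk]
    have a2 : ∑ b, k (τp b) * M * B.c (τp b) = ∑ b, k b * M * B.c b :=
      Equiv.sum_comp τp (fun b => k b * M * B.c b)
    have a3 : ∑ b, k (τp b) * M * (k (τp b) * M) = ∑ b, k b * M * (k b * M) :=
      Equiv.sum_comp τp (fun b => k b * M * (k b * M))
    rw [a1, a2, a3]
  have hmv : Monovary (f ∘ σ) g := (hmono.sum_comp_perm_mul_eq_sum_mul_iff).1 hS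
  have hid : ∀ n b, f b = n → σ b = b := by
    intro n
    induction n using Nat.strong_induction_on with
    | _ n ih =>
    intro b hb
    by_contra hne
    have h1 : f b < f (σ b) := by
      rcases lt_trichotomy (f b) (f (σ b)) with h | h | h
      · exact h
      · exact absurd (hfinj h).symm hne
      · exact absurd (σ.injective (ih _ (hb ▸ h) (σ b) rfl)) hne
    have h2 : f b < f (σ.symm b) := by
      rcases lt_trichotomy (f b) (f (σ.symm b)) with h | h | h
      · exact h
      · have h3 := hfinj h
        exact absurd (by nth_rewrite 1 [h3]; simp) hne
      · have h3 := ih _ (hb ▸ h) (σ.symm b) rfl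
        rw [Equiv.apply_symm_apply] at h3
        exact absurd (by nth_rewrite 1 [h3]; simp) hne
    have h3 := hmv (hfg _ _ h2)
    simp only [Function.comp, Equiv.apply_symm_apply] at h3
    omega
  ext b
  rw [← hσa b, hid _ _ rfl]
end


/-- Content inequality in a column of a semi-standard tableau. -/
lemma content_le {rows cols K n : ℕ} (T : Fin rows → Fin cols → Fin K × Fin n)
    (hT : IsSemiStandardTab T) (l : Fin cols) :
    ∀ (d : ℕ) (p p2 : Fin rows), (p2 : ℕ) = p + d → (T p l).1 = (T p2 l).1 →
      ((T p l).2 : ℕ) + d ≤ (T p2 l).2 := by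
  intro d
  induction d with
  | zero =>
    intro p p2 h _
    have : p = p2 := Fin.ext (by omega)
    subst this; simp
  | succ d ih =>
    intro p p2 h hi
    have hlt : (p : ℕ) + d < rows := by omega
    set p1 : Fin rows := ⟨p + d, hlt⟩ with hp1
    have h1 : p1 < p2 := by rw [Fin.lt_def]; simp [hp1]; omega
    have s1 := hT.2 l p1 p2 h1
    have h0 : (T p l).1 ≤ (T p1 l).1 := by
      rcases Nat.eq_zero_or_pos d with hd | hd
      · have : p = p1 := Fin.ext (by simp [hp1, hd])
        rw [← this]
      · have := hT.2 l p p1 (by rw [Fin.lt_def]; simp [hp1]; omega)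
        rcases this with h | h
        · exact h.le
        · exact h.1.le
    rcases s1 with s1 | ⟨s1, s2⟩
    · exact absurd (lt_of_le_of_lt h0 s1) (by rw [hi]; exact lt_irrefl _)
    · have := ih p p1 (by simp [hp1]) (by rw [hi, s1])
      rw [Fin.lt_def] at s2
      omega

lemma col_i_le {rows cols K n : ℕ} (T : Fin rows → Fin cols → Fin K × Fin n)
    (hT : IsSemiStandardTab T) (l : Fin cols) (p p2 : Fin rows) (h : p ≤ p2) :
    (T p l).1 ≤ (T p2 l).1 := by
  rcases h.lt_or_eq with h | h
  · rcases hT.2 l p p2 h with h | h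
    · exact h.le
    · exact h.1.le
  · rw [h]

/-- The box data of a semi-standard linked pair. -/
def boxData {K r0 r1 cm cp : ℕ} (L : LinkedPair K r0 r1 cm cp) (hL : IsSemiStandardPair L) :
    BoxData (Fin r0 × Fin cm) where
  i b := (L.Tm b.1 b.2).1
  p b := b.1
  l b := b.2
  q b := (L.link b).1
  c b := (L.link b).2
  hiM := by
    rintro ⟨p, l⟩ ⟨p2, l2⟩ h1 h2
    simp only at h1 h2 ⊢
    obtain rfl := Fin.ext h1
    exact col_i_le L.Tm hL.1 l p p2 h2
  hiP := by
    rintro ⟨p, l⟩ ⟨p2, l2⟩ h1 h2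
    simp only at h1 h2 ⊢
    have e1 := L.link_label p l
    have e2 := L.link_label p2 l2
    have := col_i_le L.Tp hL.2.1 (L.link (p, l)).2 _ _ (show (L.link (p, l)).1 ≤ (L.link (p2, l2)).1 from h2)
    rw [e1, Fin.ext h1, e2] at this
    exact this
  hCM := by
    rintro ⟨p, l⟩ ⟨p2, l2⟩ h0 h1 h2
    simp only at h0 h1 h2 ⊢
    obtain rfl := Fin.ext h1
    have := content_le L.Tm hL.1 l (p2 - p : ℕ) p p2 (by omega) (Fin.ext h0)
    rw [L.link_row, L.link_row]
    omega
  hCP := by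
    rintro ⟨p, l⟩ ⟨p2, l2⟩ h0 h1 h2
    simp only at h0 h1 h2 ⊢
    have e1 := L.link_label p l
    have e2 := L.link_label p2 l2
    rw [← Fin.ext h1] at e2
    have := content_le L.Tp hL.2.1 (L.link (p, l)).2 ((L.link (p2, l2)).1 - (L.link (p, l)).1 : ℕ)
      (L.link (p, l)).1 (L.link (p2, l2)).1 (by omega) (by rw [e1, e2]; exact Fin.ext h0)
    rw [e1, e2] at this
    simp only at this
    omega
  injM := by
    rintro ⟨p, l⟩ ⟨p2, l2⟩ h1 h2
    exact Prod.ext (Fin.ext h2) (Fin.ext h1)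
  injP := by
    rintro b b2 h1 h2
    exact L.link.injective (Prod.ext (Fin.ext h2) (Fin.ext h1))
  link := by
    rintro ⟨p, l⟩ ⟨p2, l2⟩ h0 h1 h2 h3
    simp only at h0 h1 h2 h3 ⊢
    obtain rfl := Fin.ext h1
    rw [L.link_row, L.link_row] at h2
    exact hL.2.2 p l l2 (Prod.ext (Fin.ext h0) (Fin.ext h2)) h3

section
variable {K r0 r1 cm cp : ℕ} (L : LinkedPair K r0 r1 cm cp)

/-- Action of `α⁻` on boxes. -/
def tauM (αm : Fin cm → Equiv.Perm (Fin r0)) : Equiv.Perm (Fin r0 × Fin cm) :=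
  Equiv.prodCongrLeft αm

/-- Action of `α⁺` on boxes. -/
def tauP (αp : Fin cp → Equiv.Perm (Fin r1)) : Equiv.Perm (Fin r0 × Fin cm) :=
  (L.link.trans (Equiv.prodCongrLeft αp)).trans L.link.symm

/-- exponent of a term -/
noncomputable def termExp (αm : Fin cm → Equiv.Perm (Fin r0)) (αp : Fin cp → Equiv.Perm (Fin r1)) :
    KVar K r0 r1 →₀ ℕ :=
  ∑ b : Fin r0 × Fin cm, Finsupp.single ((L.Tm b.1 b.2).1, αp (L.link b).2 (L.link b).1, αm b.2 b.1) 1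

lemma termExp_apply (hL : IsSemiStandardPair L) (αm : Fin cm → Equiv.Perm (Fin r0))
    (αp : Fin cp → Equiv.Perm (Fin r1)) (v : KVar K r0 r1) :
    termExp L αm αp v = nn (boxData L hL) (tauM αm) (tauP L αp) v.1 v.2.1 v.2.2 := by
  classical
  obtain ⟨i, q, p⟩ := v
  unfold termExp nn
  rw [Finsupp.finsetSum_apply, Finset.filter_filter, Finset.card_filter]
  refine Finset.sum_congr rfl fun b _ => ?_
  rw [Finsupp.single_apply]
  refine if_congr ?_ rfl rfl
  simp [boxData, tauM, tauP, Fin.ext_iff]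

lemma monExpM_eq : monExpM L = termExp L 1 1 := by
  unfold monExpM termExp
  rw [Fintype.sum_prod_type]
  refine Finset.sum_congr rfl fun p _ => Finset.sum_congr rfl fun l _ => ?_
  simp [L.link_row]

lemma term_sign (αm : Fin cm → Equiv.Perm (Fin r0)) (αp : Fin cp → Equiv.Perm (Fin r1))
    (h : tauM αm = tauP L αp) :
    ((∏ l, (Equiv.Perm.sign (αm l) : ℤ)) * ∏ c, (Equiv.Perm.sign (αp c) : ℤ)) = 1 := by
  classical
  have h1 : Equiv.Perm.sign (tauM αm) = ∏ l, Equiv.Perm.sign (αm l) :=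
    Equiv.Perm.sign_prodCongrLeft αm
  have h2 : Equiv.Perm.sign (tauP L αp) = ∏ l, Equiv.Perm.sign (αp l) := by
    rw [← Equiv.Perm.sign_prodCongrLeft αp]
    exact Equiv.Perm.sign_symm_trans_trans _ L.link.symm
  rw [h, h2] at h1
  have : ∀ (n m : ℕ) (a : Fin n → Equiv.Perm (Fin m)), (∏ l, (Equiv.Perm.sign (a l) : ℤ)) = ((∏ l, Equiv.Perm.sign (a l) : ℤˣ) : ℤ) := by
    intro n m a; simp
  rw [this, this, ← h1, ← Units.val_mul, Int.units_mul_self]; rfl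

lemma pairPoly_eq : pairPoly L =
    ∑ α : (Fin cm → Equiv.Perm (Fin r0)) × (Fin cp → Equiv.Perm (Fin r1)),
      MvPolynomial.monomial (termExp L α.1 α.2)
        ((((∏ l, (Equiv.Perm.sign (α.1 l) : ℤ)) * ∏ c, (Equiv.Perm.sign (α.2 c) : ℤ) : ℤ)) : ℂ) := by
  classical
  unfold pairPoly
  rw [Fintype.sum_prod_type]
  refine Finset.sum_congr rfl fun αm _ => Finset.sum_congr rfl fun αp _ => ?_
  have : ∏ p : Fin r0, ∏ l : Fin cm, (MvPolynomial.X
          ((L.Tm p l).1, αp (L.link (p, l)).2 (L.link (p, l)).1, αm l p) : KPoly K r0 r1) =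
      MvPolynomial.monomial (termExp L αm αp) 1 := by
    unfold termExp
    rw [MvPolynomial.monomial_sum_one, Fintype.prod_prod_type]
    rfl
  rw [this, ← Int.cast_smul_eq_zsmul ℂ, MvPolynomial.smul_monomial, smul_eq_mul, mul_one]

lemma termExp_cases (hL : IsSemiStandardPair L) (αm : Fin cm → Equiv.Perm (Fin r0))
    (αp : Fin cp → Equiv.Perm (Fin r1)) :
    (termExp L αm αp = monExpM L ∧
      ((∏ l, (Equiv.Perm.sign (αm l) : ℤ)) * ∏ c, (Equiv.Perm.sign (αp c) : ℤ)) = 1) ∨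
    (MonLT (termExp L αm αp) (monExpM L)) := by
  classical
  set B := boxData L hL with hB
  have hm : ∀ b, B.l (tauM αm b) = B.l b := by rintro ⟨p, l⟩; rfl
  have hp : ∀ b, B.c (tauP L αp b) = B.c b := by
    intro b; simp [hB, boxData, tauP]
  have t1 : (tauM (1 : Fin cm → Equiv.Perm (Fin r0))) = 1 := by ext b <;> simp [tauM]
  have t2 : (tauP L (1 : Fin cp → Equiv.Perm (Fin r1))) = 1 := by
    ext b <;> simp [tauP, Equiv.prodCongrLeft]
  have ev : ∀ v, monExpM L v = nn B 1 1 v.1 v.2.1 v.2.2 := by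
    intro v; rw [monExpM_eq, termExp_apply L hL, t1, t2]
  have big : ∀ I Q P, ¬ (I < K ∧ Q < r1 ∧ P < r0) → ∀ σ τ, nn B σ τ I Q P = 0 := by
    intro I Q P h σ τ
    unfold nn
    rw [card_eq_zero, filter_eq_empty_iff]
    intro b hb
    rw [mem_filter] at hb
    intro hc
    rw [Prod.mk.injEq] at hc
    refine h ⟨?_, ?_, ?_⟩
    · rw [← hb.2]; exact Fin.is_lt _
    · rw [← hc.1]; exact Fin.is_lt _
    · rw [← hc.2]; exact Fin.is_lt _
  by_cases hne : ∃ I Q P, nn B (tauM αm) (tauP L αp) I Q P ≠ nn B 1 1 I Q P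
  · right
    obtain ⟨I, Q, P, h1, h2⟩ := exists_first B _ _ hm hp hne
    have hb : I < K ∧ Q < r1 ∧ P < r0 := by
      by_contra hc
      rw [big I Q P hc, big I Q P hc] at h1
      exact lt_irrefl _ h1
    refine ⟨(⟨I, hb.1⟩, ⟨Q, hb.2.1⟩, ⟨P, hb.2.2⟩), ?_, ?_⟩
    · rw [termExp_apply L hL, ev]; exact h1
    · intro w hw
      rw [termExp_apply L hL, ev]
      apply h2
      rcases hw with h | ⟨h, h'⟩
      · exact Or.inl h
      · refine Or.inr ⟨congrArg Fin.val h, ?_⟩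
        rcases h' with h' | ⟨h', h''⟩
        · exact Or.inl h'
        · exact Or.inr ⟨congrArg Fin.val h', h''⟩
  · left
    push Not at hne
    refine ⟨?_, term_sign L αm αp (tau_eq B _ _ hm hp hne)⟩
    ext v
    rw [termExp_apply L hL, ev, ← hB, hne]

lemma MonLT.irrefl (a : KVar K r0 r1 →₀ ℕ) : ¬ MonLT a a := by
  rintro ⟨v, h, _⟩; exact lt_irrefl _ h

lemma VarGT.tri (v w : KVar K r0 r1) : VarGT v w ∨ v = w ∨ VarGT w v := by
  obtain ⟨a, b, c⟩ := v
  obtain ⟨a', b', c'⟩ := w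
  simp only [VarGT, Prod.mk.injEq]
  rcases lt_trichotomy a a' with h | h | h <;> rcases lt_trichotomy b b' with h' | h' | h' <;>
    rcases lt_trichotomy c c' with h'' | h'' | h'' <;> simp_all

lemma MonLT.asymm {a b : KVar K r0 r1 →₀ ℕ} (h1 : MonLT a b) : ¬ MonLT b a := by
  obtain ⟨v, hv, hv'⟩ := h1
  rintro ⟨w, hw, hw'⟩
  rcases VarGT.tri v w with h | h | h
  · have := hw' v h; omega
  · subst h; omega
  · have := hv' w h; omega

lemma IsLM.unique {f : KPoly K r0 r1} {a b : KVar K r0 r1 →₀ ℕ} (ha : IsLM f a) (hb : IsLM f b) :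
    a = b := by
  rcases ha.2 b hb.1 with h | h
  · exact h.symm
  · rcases hb.2 a ha.1 with h' | h'
    · exact h'
    · exact absurd h' h.asymm

/-- The leading monomial of the semi-invariant of a semi-standard linked pair. -/
lemma pairPoly_isLM (hL : IsSemiStandardPair L) : IsLM (pairPoly L) (monExpM L) := by
  classical
  have hc : ∀ m, MvPolynomial.coeff m (pairPoly L) =
      ∑ α : (Fin cm → Equiv.Perm (Fin r0)) × (Fin cp → Equiv.Perm (Fin r1)),
      if termExp L α.1 α.2 = m then ((((∏ l, (Equiv.Perm.sign (α.1 l) : ℤ)) *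
        ∏ c, (Equiv.Perm.sign (α.2 c) : ℤ) : ℤ)) : ℂ) else 0 := by
    intro m
    rw [pairPoly_eq, MvPolynomial.coeff_sum]
    exact sum_congr rfl fun α _ => MvPolynomial.coeff_monomial _ _ _
  constructor
  · rw [MvPolynomial.mem_support_iff, hc]
    have : ∀ α : (Fin cm → Equiv.Perm (Fin r0)) × (Fin cp → Equiv.Perm (Fin r1)),
      (if termExp L α.1 α.2 = monExpM L then ((((∏ l, (Equiv.Perm.sign (α.1 l) : ℤ)) *
        ∏ c, (Equiv.Perm.sign (α.2 c) : ℤ) : ℤ)) : ℂ) else 0) =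
      ((if termExp L α.1 α.2 = monExpM L then 1 else 0 : ℕ) : ℂ) := by
      intro α
      split_ifs with h
      · rcases termExp_cases L hL α.1 α.2 with h' | h'
        · rw [h'.2]; simp
        · rw [h] at h'; exact absurd h' (MonLT.irrefl _)
      · simp
    rw [sum_congr rfl fun α _ => this α, ← Nat.cast_sum, Nat.cast_ne_zero]
    refine (sum_pos' (fun _ _ => Nat.zero_le _) ⟨1, mem_univ _, ?_⟩).ne'
    rw [if_pos]
    · exact one_pos
    · exact (monExpM_eq L).symm
  · intro m hm
    rw [MvPolynomial.mem_support_iff, hc] at hm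
    obtain ⟨α, _, hα⟩ := exists_ne_zero_of_sum_ne_zero hm
    have : termExp L α.1 α.2 = m := by
      by_contra h
      exact hα (if_neg h)
    rw [← this]
    rcases termExp_cases L hL α.1 α.2 with h' | h'
    · exact Or.inl h'.1
    · exact Or.inr h'

end


lemma monExpM_degree {K r0 r1 cm cp : ℕ} (L : LinkedPair K r0 r1 cm cp) :
    (monExpM L).degree = r0 * cm := by
  unfold monExpM
  rw [map_sum]
  simp_rw [map_sum]
  simp [Finsupp.degree_single]

lemma monExpM_mem_closure {K r0 r1 : ℕ} (h0 : 1 ≤ r0) : ∀ (N cm cp : ℕ) (_ : cm ≤ N)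
    (L : LinkedPair K r0 r1 cm cp) (_ : IsSemiStandardPair L),
    monExpM L ∈ AddSubmonoid.closure {m : KVar K r0 r1 →₀ ℕ |
      ∃ (sh : ℕ × ℕ) (L : LinkedPair K r0 r1 sh.1 sh.2), IsPrimitive L ∧ IsLM (pairPoly L) m} := by
  intro N
  induction N with
  | zero =>
    intro cm cp h L hL
    obtain rfl : cm = 0 := by omega
    have : monExpM L = 0 := by simp [monExpM]
    rw [this]; exact zero_mem _
  | succ N ih =>
    intro cm cp h L hL
    by_cases hp : IsPrimitive L
    · exact AddSubmonoid.subset_closure ⟨(cm, cp), L, hp, pairPoly_isLM L hL⟩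
    · rcases Nat.eq_zero_or_pos cm with hc | hc
      · exact ih cm cp (by omega) L hL
      · have : ∃ (cm1 cp1 cm2 cp2 : ℕ) (L1 : LinkedPair K r0 r1 cm1 cp1)
          (L2 : LinkedPair K r0 r1 cm2 cp2) (m m1 m2 : KVar K r0 r1 →₀ ℕ),
          0 < cm1 ∧ 0 < cm2 ∧ IsSemiStandardPair L1 ∧ IsSemiStandardPair L2 ∧
          IsLM (pairPoly L) m ∧ IsLM (pairPoly L1) m1 ∧ IsLM (pairPoly L2) m2 ∧
          m = m1 + m2 := by
          by_contra hcon
          exact hp ⟨hL, hc, hcon⟩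
        obtain ⟨cm1, cp1, cm2, cp2, L1, L2, m, m1, m2, c1, c2, s1, s2, l, l1, l2, e⟩ := this
        obtain rfl := l.unique (pairPoly_isLM L hL)
        obtain rfl := l1.unique (pairPoly_isLM L1 s1)
        obtain rfl := l2.unique (pairPoly_isLM L2 s2)
        have hd := congrArg Finsupp.degree e
        rw [map_add, monExpM_degree, monExpM_degree, monExpM_degree, ← Nat.mul_add] at hd
        have hd := Nat.eq_of_mul_eq_mul_left (by omega) hd
        rw [e]
        exact add_mem (ih _ _ (by omega) L1 s1) (ih _ _ (by omega) L2 s2)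

lemma finish {K r0 r1 cm cp : ℕ} (h0 : 1 ≤ r0) (L : LinkedPair K r0 r1 cm cp)
    (hL : IsSemiStandardPair L) (mo : KVar K r0 r1 →₀ ℕ) (hmo : mo = monExpM L) :
    ∃ (n : ℕ) (sh : Fin n → ℕ × ℕ)
      (Ls : (i : Fin n) → LinkedPair K r0 r1 (sh i).1 (sh i).2)
      (ms : Fin n → (KVar K r0 r1 →₀ ℕ)),
      (∀ i, IsPrimitive (Ls i)) ∧ (∀ i, IsLM (pairPoly (Ls i)) (ms i)) ∧
      mo = ∑ i, ms i := by
  have := monExpM_mem_closure h0 cm cm cp le_rfl L hL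
  obtain ⟨l, hl, hs⟩ := AddSubmonoid.exists_list_of_mem_closure this
  have hall : ∀ i : Fin l.length, ∃ (sh : ℕ × ℕ) (L : LinkedPair K r0 r1 sh.1 sh.2),
      IsPrimitive L ∧ IsLM (pairPoly L) (l.get i) := fun i => hl _ (l.get_mem i)
  choose sh Ls h1 h2 using hall
  refine ⟨l.length, sh, Ls, l.get, h1, h2, ?_⟩
  rw [hmo, ← hs]
  exact (Fin.sum_univ_getElem l).symm



/-- Sorting boxes with prescribed multiplicities of labels. -/
lemma exists_rowIso {α : Type} [LinearOrder α] [Fintype α] (n : α → ℕ) (c : ℕ)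
    (hc : ∑ a, n a = c) :
    ∃ e : Fin c ≃ (Σ a, Fin (n a)), (∀ x y, x ≤ y → (e x).1 ≤ (e y).1) ∧
      (∀ a (s t : Fin (n a)), s < t → e.symm ⟨a, s⟩ < e.symm ⟨a, t⟩) := by
  classical
  have hcard : Fintype.card (Σₗ a, Fin (n a)) = c := by
    rw [← hc]
    have : Fintype.card (Σₗ a, Fin (n a)) = Fintype.card (Σ a, Fin (n a)) :=
      Fintype.card_congr (ofLex)
    rw [this]; simp
  let f : Fin c ≃o (Σₗ a, Fin (n a)) := Fintype.orderIsoFinOfCardEq _ hcard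
  refine ⟨f.toEquiv.trans ofLex, ?_, ?_⟩
  · intro x y h
    have h2 : f x ≤ f y := f.monotone h
    rcases Sigma.Lex.le_def.1 h2 with h3 | ⟨h3, _⟩
    · exact h3.le
    · exact h3.le
  · intro a s t h
    have : (toLex ⟨a, s⟩ : Σₗ a, Fin (n a)) < toLex ⟨a, t⟩ :=
      Sigma.Lex.lt_def.2 (Or.inr ⟨rfl, h⟩)
    exact f.symm.strictMono this

lemma card_rowIso {α : Type} [Fintype α] (n : α → ℕ) (c : ℕ)
    (e : Fin c ≃ (Σ a, Fin (n a))) (S : Finset α) [DecidableEq α] :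
    #{y : Fin c | (e y).1 ∈ S} = ∑ b ∈ S, n b := by
  have : #{y : Fin c | (e y).1 ∈ S} = #(S.sigma fun a => (univ : Finset (Fin (n a)))) := by
    refine card_bij (fun y _ => e y) ?_ ?_ ?_
    · intro y hy; simp at hy; simpa using hy
    · intro a _ b _ h; exact e.injective h
    · intro b hb
      refine ⟨e.symm b, ?_, by simp⟩
      simp at hb; simpa using hb
  rw [this, card_sigma]; simp

lemma col_strict {α : Type} [LinearOrder α] [Fintype α] (n n' : α → ℕ) (c : ℕ)
    (e : Fin c ≃ (Σ a, Fin (n a))) (e' : Fin c ≃ (Σ a, Fin (n' a)))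
    (he : ∀ x y, x ≤ y → (e x).1 ≤ (e y).1) (he' : ∀ x y, x ≤ y → (e' x).1 ≤ (e' y).1)
    (h : ∀ a, ∑ b with b ≤ a, n' b ≤ ∑ b with b < a, n b) (x : Fin c) :
    (e x).1 < (e' x).1 := by
  classical
  by_contra hc
  push Not at hc
  have h1 := h (e' x).1
  rw [← card_rowIso n' c e', ← card_rowIso n c e] at h1
  have h2 : #(Iic x) ≤ #{y : Fin c | (e' y).1 ∈ ({b | b ≤ (e' x).1} : Finset α)} := by
    refine card_le_card fun y hy => ?_
    simp only [mem_filter, mem_univ, true_and]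
    exact he' _ _ (mem_Iic.1 hy)
  have h3 : #{y : Fin c | (e y).1 ∈ ({b | b < (e' x).1} : Finset α)} ≤ #(Iio x) := by
    refine card_le_card fun y hy => ?_
    simp only [mem_filter, mem_univ, true_and] at hy
    rw [mem_Iio]
    by_contra hxy
    exact absurd (lt_of_lt_of_le hy hc) (not_lt.2 (he _ _ (not_lt.1 hxy)))
  rw [Fin.card_Iic] at h2
  rw [Fin.card_Iio] at h3
  omega

lemma semistd_of_rows {K n r c : ℕ} (w : Fin r → Fin K ×ₗ Fin n → ℕ)
    (e : ∀ p : Fin r, Fin c ≃ (Σ a, Fin (w p a)))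
    (he : ∀ p x y, x ≤ y → (e p x).1 ≤ (e p y).1)
    (h : ∀ p p' : Fin r, (p' : ℕ) = p + 1 → ∀ a, ∑ b with b ≤ a, w p' b ≤ ∑ b with b < a, w p b) :
    IsSemiStandardTab (fun p x => ofLex (e p x).1) := by
  constructor
  · intro p x y hxy
    have := he p x y hxy
    rw [Prod.Lex.le_iff] at this
    exact this
  · intro x p p' hp
    have key : ∀ d : ℕ, ∀ p p' : Fin r, (p' : ℕ) = p + d + 1 → (e p x).1 < (e p' x).1 := by
      intro d
      induction d with
      | zero => intro p p' hp; exact col_strict _ _ _ _ _ (he p) (he p') (h p p' (by omega)) x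
      | succ d ih =>
        intro p p' hp
        have hlt : (p : ℕ) + d + 1 < r := by omega
        exact (ih p ⟨p + d + 1, hlt⟩ rfl).trans
          (col_strict _ _ _ _ _ (he _) (he p') (h _ p' (by simp only; omega)) x)
    have := key (p' - p - 1 : ℕ) p p' (by rw [Fin.lt_def] at hp; omega)
    rw [Prod.Lex.lt_iff] at this
    exact this

/-- Construct a semi-standard linked pair with given leading monomial. -/
lemma exists_pair {K r0 r1 : ℕ} (m : KVar K r0 r1 →₀ ℕ) (cm cp : ℕ)
    (hcm : ∀ p, ∑ a : Fin K ×ₗ Fin r1, m ((ofLex a).1, (ofLex a).2, p) = cm)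
    (hcp : ∀ q, ∑ a : Fin K ×ₗ Fin r0, m ((ofLex a).1, q, (ofLex a).2) = cp)
    (hM : ∀ p p' : Fin r0, (p' : ℕ) = p + 1 → ∀ a : Fin K ×ₗ Fin r1,
      ∑ b with b ≤ a, m ((ofLex b).1, (ofLex b).2, p') ≤
      ∑ b with b < a, m ((ofLex b).1, (ofLex b).2, p))
    (hP : ∀ q q' : Fin r1, (q' : ℕ) = q + 1 → ∀ a : Fin K ×ₗ Fin r0,
      ∑ b with b ≤ a, m ((ofLex b).1, q', (ofLex b).2) ≤
      ∑ b with b < a, m ((ofLex b).1, q, (ofLex b).2)) :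
    ∃ L : LinkedPair K r0 r1 cm cp, IsSemiStandardPair L ∧ monExpM L = m := by
  classical
  choose eM hM1 hM2 using fun p => exists_rowIso
    (fun a : Fin K ×ₗ Fin r1 => m ((ofLex a).1, (ofLex a).2, p)) cm (hcm p)
  choose eP hP1 hP2 using fun q => exists_rowIso
    (fun a : Fin K ×ₗ Fin r0 => m ((ofLex a).1, q, (ofLex a).2)) cp (hcp q)
  let EM : Fin r0 × Fin cm ≃ (Σ v, Fin (m v)) :=
    { toFun := fun b => ⟨((ofLex (eM b.1 b.2).1).1, (ofLex (eM b.1 b.2).1).2, b.1), (eM b.1 b.2).2⟩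
      invFun := fun s => (s.1.2.2, (eM s.1.2.2).symm ⟨toLex (s.1.1, s.1.2.1), s.2⟩)
      left_inv := by
        rintro ⟨p, c⟩
        exact Prod.ext rfl ((eM p).symm_apply_apply c)
      right_inv := by
        rintro ⟨⟨i, q, p⟩, t⟩
        exact congrArg (fun s : Σ a : Fin K ×ₗ Fin r1, Fin (m ((ofLex a).1, (ofLex a).2, p)) =>
          (⟨((ofLex s.1).1, (ofLex s.1).2, p), s.2⟩ : Σ v, Fin (m v)))
          ((eM p).apply_symm_apply ⟨toLex (i, q), t⟩) }
  let EP : Fin r1 × Fin cp ≃ (Σ v, Fin (m v)) :=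
    { toFun := fun b => ⟨((ofLex (eP b.1 b.2).1).1, b.1, (ofLex (eP b.1 b.2).1).2), (eP b.1 b.2).2⟩
      invFun := fun s => (s.1.2.1, (eP s.1.2.1).symm ⟨toLex (s.1.1, s.1.2.2), s.2⟩)
      left_inv := by
        rintro ⟨p, c⟩
        exact Prod.ext rfl ((eP p).symm_apply_apply c)
      right_inv := by
        rintro ⟨⟨i, q, p⟩, t⟩
        exact congrArg (fun s : Σ a : Fin K ×ₗ Fin r0, Fin (m ((ofLex a).1, q, (ofLex a).2)) =>
          (⟨((ofLex s.1).1, q, (ofLex s.1).2), s.2⟩ : Σ v, Fin (m v)))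
          ((eP q).apply_symm_apply ⟨toLex (i, p), t⟩) }
  let L : LinkedPair K r0 r1 cm cp :=
    { Tm := fun p c => ofLex (eM p c).1
      Tp := fun q c => ofLex (eP q c).1
      link := EM.trans EP.symm
      link_row := fun p c => rfl
      link_label := fun p c => by
        exact congrArg (fun s => ofLex s.1)
          ((eP (ofLex (eM p c).1).2).apply_symm_apply ⟨toLex ((ofLex (eM p c).1).1, p), (eM p c).2⟩) }
  refine ⟨L, ⟨semistd_of_rows _ eM hM1 hM, semistd_of_rows _ eP hP1 hP, ?_⟩, ?_⟩
  · intro p c c' hT hc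
    have h1 : (eM p c).1 = (eM p c').1 := hT
    change (eP (ofLex (eM p c).1).2).symm ⟨toLex ((ofLex (eM p c).1).1, p), (eM p c).2⟩ <
      (eP (ofLex (eM p c').1).2).symm ⟨toLex ((ofLex (eM p c').1).1, p), (eM p c').2⟩
    have hc1 : (eM p).symm (eM p c) < (eM p).symm (eM p c') := by simpa using hc
    revert h1 hc1
    generalize eM p c = x
    generalize eM p c' = y
    obtain ⟨a, s⟩ := x
    obtain ⟨a', t⟩ := y
    intro h1 hc1
    simp only at h1
    subst h1
    apply hP2
    by_contra hst
    rcases (not_lt.1 hst).lt_or_eq with h | h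
    · exact absurd (hM2 p a t s h) (not_lt.2 hc1.le)
    · subst h; exact lt_irrefl _ hc1
  · have h1 : monExpM L = ∑ b : Fin r0 × Fin cm, Finsupp.single (EM b).1 1 := by
      unfold monExpM
      rw [Fintype.sum_prod_type]
      rfl
    rw [h1, Equiv.sum_comp EM (fun s => Finsupp.single s.1 1), Fintype.sum_sigma]
    ext v
    simp



section
open MvPolynomial
variable {ι : Type} [LinearOrder ι] [Fintype ι]

/-- The operator `∑ ∂/∂z_j`. -/
noncomputable def DD (ι : Type) [Fintype ι] : Module.End ℂ (MvPolynomial ι ℂ) :=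
  ∑ j, (pderiv j : Derivation ℂ (MvPolynomial ι ℂ) (MvPolynomial ι ℂ)).toLinearMap

lemma DD_apply (G : MvPolynomial ι ℂ) : DD ι G = ∑ j, pderiv j G := by
  simp [DD]

lemma coeff_DD (G : MvPolynomial ι ℂ) (x : ι →₀ ℕ) :
    coeff x (DD ι G) = ∑ j, coeff (x + Finsupp.single j 1) G * (x j + 1) := by
  rw [DD_apply, coeff_sum]
  exact sum_congr rfl fun j _ => coeff_pderiv _ _

lemma DD_X_mul (l : ι) (G : MvPolynomial ι ℂ) : DD ι (X l * G) = X l * DD ι G + G := by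
  classical
  rw [DD_apply, DD_apply]
  simp only [pderiv_mul, pderiv_X, sum_add_distrib, mul_sum]
  rw [add_comm]
  congr 1
  simp [Pi.single_apply]

lemma DD_pow_X_mul (l : ι) (G : MvPolynomial ι ℂ) (n : ℕ) :
    (DD ι ^ (n + 1)) (X l * G) = X l * (DD ι ^ (n + 1)) G + ((n + 1 : ℕ) : ℂ) • (DD ι ^ n) G := by
  induction n with
  | zero => simp [DD_X_mul]
  | succ n ih =>
    rw [pow_succ', Module.End.mul_apply, ih, map_add, DD_X_mul, map_smul,
      ← Module.End.mul_apply, ← pow_succ', ← Module.End.mul_apply, ← pow_succ', add_assoc]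
    congr 1
    push_cast
    module

lemma eq_zero_of_X_DD (l : ι) : ∀ (N : ℕ) (G : MvPolynomial ι ℂ) (c : ℕ), 0 < c → G.totalDegree ≤ N →
    X l * DD ι G = -((c : ℂ) • G) → G = 0 := by
  intro N
  induction N with
  | zero =>
    intro G c hc hd h
    have hG : G = C (coeff 0 G) := totalDegree_eq_zero_iff_eq_C.1 (by omega)
    have : DD ι G = 0 := by rw [hG, DD_apply]; simp
    rw [this, mul_zero] at h
    have h2 : (c : ℂ) • G = 0 := by rw [← neg_eq_zero]; exact h.symm
    exact (smul_eq_zero.1 h2).resolve_left (by exact_mod_cast hc.ne')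
  | succ N ih =>
    intro G c hc hd h
    have hc' : (c : ℂ) ≠ 0 := by exact_mod_cast hc.ne'
    have : G = X l * (-((c : ℂ)⁻¹ • DD ι G)) := by
      rw [mul_neg, mul_smul_comm, h, smul_neg, smul_smul, inv_mul_cancel₀ hc', one_smul, neg_neg]
    obtain ⟨G1, hG1⟩ : ∃ G1, G = X l * G1 := ⟨_, this⟩
    by_cases h0 : G1 = 0
    · rw [hG1, h0, mul_zero]
    rw [hG1, DD_X_mul] at h
    have h2 : X l * (X l * DD ι G1 + G1) = X l * (-((c : ℂ) • G1)) := by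
      rw [h, mul_neg, mul_smul_comm]
    have h3 := mul_left_cancel₀ (X_ne_zero l) h2
    have h4 : X l * DD ι G1 = -(((c + 1 : ℕ) : ℂ) • G1) := by
      rw [eq_sub_of_add_eq h3]; push_cast; module
    have hdeg : G.totalDegree = 1 + G1.totalDegree := by
      rw [hG1, totalDegree_mul_of_isDomain (X_ne_zero l) h0, totalDegree_X]
    rw [hG1, ih G1 (c + 1) (by omega) (by omega) h4, mul_zero]

lemma DD_pow_of_X_mul (l : ι) (G : MvPolynomial ι ℂ) (n : ℕ) (h : (DD ι ^ (n + 1)) (X l * G) = 0) :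
    (DD ι ^ n) G = 0 := by
  rw [DD_pow_X_mul] at h
  refine eq_zero_of_X_DD l _ _ (n + 1) (by omega) le_rfl ?_
  rw [← Module.End.mul_apply, ← pow_succ']
  exact eq_neg_of_add_eq_zero_left h

lemma DD_pow_of_X_pow_mul (l : ι) (G : MvPolynomial ι ℂ) (hG : G ≠ 0) : ∀ (b k : ℕ),
    (DD ι ^ k) (X l ^ b * G) = 0 → b < k ∧ (DD ι ^ (k - b)) G = 0 := by
  intro b
  induction b with
  | zero =>
    intro k h
    rw [pow_zero, one_mul] at h
    refine ⟨?_, h⟩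
    rcases Nat.eq_zero_or_pos k with hk | hk
    · subst hk; exact absurd (by simpa using h) hG
    · exact hk
  | succ b ih =>
    intro k h
    rcases k with _ | k
    · exact absurd (by simpa using h) (mul_ne_zero (pow_ne_zero (b + 1) (X_ne_zero l)) hG)
    · rw [pow_succ' (X l), mul_assoc] at h
      have := ih k (DD_pow_of_X_mul l _ _ h)
      rw [Nat.add_sub_add_right]
      exact ⟨by omega, this.2⟩

/-- `∂/∂z_l` as an endomorphism. -/
noncomputable def PD (l : ι) : Module.End ℂ (MvPolynomial ι ℂ) :=
  (pderiv l : Derivation ℂ (MvPolynomial ι ℂ) (MvPolynomial ι ℂ)).toLinearMap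

lemma coeff_PD (l : ι) (G : MvPolynomial ι ℂ) (x : ι →₀ ℕ) :
    coeff x (PD l G) = coeff (x + Finsupp.single l 1) G * (x l + 1) := coeff_pderiv _ _

lemma PD_comm (j l : ι) : Commute (PD j) (PD l) := by
  refine LinearMap.ext fun G => ?_
  ext x
  simp only [Module.End.mul_apply, coeff_PD, Finsupp.add_apply]
  by_cases h : j = l
  · subst h; rfl
  · rw [Finsupp.single_eq_of_ne h, Finsupp.single_eq_of_ne (Ne.symm h), add_right_comm]
    simp only [add_zero]
    ring

lemma DD_comm (l : ι) : Commute (DD ι) (PD l) :=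
  Commute.sum_left _ _ _ fun j _ => PD_comm j l

lemma PD_pow_eq_zero (l : ι) : ∀ (n : ℕ) (G : MvPolynomial ι ℂ), (∀ x, n ≤ x l → coeff x G = 0) →
    (PD l ^ n) G = 0 := by
  intro n
  induction n with
  | zero => intro G h; ext x; simpa using h x (Nat.zero_le _)
  | succ n ih =>
    intro G h
    rw [pow_succ, Module.End.mul_apply]
    apply ih
    intro x hx
    rw [coeff_PD, h, zero_mul]
    simp; exact hx

lemma sub_pow_apply_eq_zero (l : ι) (G : MvPolynomial ι ℂ) (a b : ℕ) (ha : (DD ι ^ (a + 1)) G = 0)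
    (hb : (PD l ^ (b + 1)) G = 0) : ((DD ι - PD l) ^ (a + b + 1)) G = 0 := by
  have hmono : ∀ (T : Module.End ℂ (MvPolynomial ι ℂ)) (n m : ℕ), n ≤ m → (T ^ n) G = 0 → (T ^ m) G = 0 := by
    intro T n m h h'
    rw [← Nat.sub_add_cancel h, pow_add, Module.End.mul_apply, h', map_zero]
  have hcm : Commute (DD ι) (-PD l) := (DD_comm l).neg_right
  have hnb : ((-PD l) ^ (b + 1)) G = 0 := by
    have : ∀ n, ((-PD l) ^ n) G = ((-1 : ℂ) ^ n) • (PD l ^ n) G := by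
      intro n
      induction n with
      | zero => simp
      | succ n ih =>
        rw [pow_succ', Module.End.mul_apply, ih, map_smul, pow_succ' (PD l), Module.End.mul_apply,
          LinearMap.neg_apply, pow_succ]
        module
    rw [this, hb, smul_zero]
  rw [sub_eq_add_neg, hcm.add_pow', LinearMap.sum_apply]
  refine sum_eq_zero fun m hm => ?_
  rw [HasAntidiagonal.mem_antidiagonal] at hm
  rw [LinearMap.smul_apply]
  by_cases h : a + 1 ≤ m.1
  · rw [(hcm.pow_pow _ _).eq, Module.End.mul_apply, hmono _ _ _ h ha, map_zero, smul_zero]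
  · rw [Module.End.mul_apply, hmono _ (b + 1) m.2 (by omega) hnb, map_zero, smul_zero]

/-- setting `z_l = 0`. -/
noncomputable def RR (l : ι) (G : MvPolynomial ι ℂ) : MvPolynomial ι ℂ := modMonomial G (Finsupp.single l 1)

lemma coeff_RR (l : ι) (G : MvPolynomial ι ℂ) (x : ι →₀ ℕ) :
    coeff x (RR l G) = if x l = 0 then coeff x G else 0 := by
  unfold RR
  split_ifs with h
  · exact coeff_modMonomial_of_not_le _ (by simp [Finsupp.single_le_iff, h])
  · exact coeff_modMonomial_of_le _ (by simp [Finsupp.single_le_iff]; omega)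

lemma DD_RR (l : ι) (G : MvPolynomial ι ℂ) : DD ι (RR l G) = RR l ((DD ι - PD l) G) := by
  classical
  ext x
  rw [coeff_DD, coeff_RR, LinearMap.sub_apply, coeff_sub, coeff_DD, coeff_PD]
  simp only [coeff_RR]
  split_ifs with h
  · rw [← sum_erase_eq_sub (mem_univ l), ← sum_erase_add _ _ (mem_univ l)]
    rw [if_neg (by simp), zero_mul, add_zero]
    refine sum_congr rfl fun j hj => ?_
    rw [mem_erase] at hj
    rw [if_pos]
    simp [h, Finsupp.single_eq_of_ne hj.1.symm]
  · refine sum_eq_zero fun j _ => ?_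
    rw [if_neg, zero_mul]
    rw [Finsupp.add_apply]; omega

lemma DD_pow_RR (l : ι) (n : ℕ) (G : MvPolynomial ι ℂ) :
    (DD ι ^ n) (RR l G) = RR l (((DD ι - PD l) ^ n) G) := by
  induction n with
  | zero => rfl
  | succ n ih => rw [pow_succ', Module.End.mul_apply, ih, DD_RR, pow_succ', Module.End.mul_apply]

lemma DD_step (l : ι) (H : MvPolynomial ι ℂ) (b e k : ℕ) (hk : (DD ι ^ (k + 1)) H = 0)
    (hlo : ∀ x, x l < b → coeff x H = 0) (hhi : ∀ x, e < x l → coeff x H = 0)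
    (h0 : H ≠ 0) (hbe : b ≤ e) :
    b ≤ k ∧ ∃ H', (DD ι ^ ((k - b) + (e - b) + 1)) H' = 0 ∧
      ∀ x, coeff x H' = if x l = 0 then coeff (x + Finsupp.single l b) H else 0 := by
  classical
  have hmod : modMonomial H (Finsupp.single l b) = 0 := by
    ext x
    by_cases h : Finsupp.single l b ≤ x
    · rw [coeff_modMonomial_of_le _ h]; simp
    · rw [coeff_modMonomial_of_not_le _ h, hlo, coeff_zero]
      rw [Finsupp.single_le_iff] at h; omega
  set G := divMonomial H (Finsupp.single l b) with hGdef
  have hG : H = X l ^ b * G := by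
    have := divMonomial_add_modMonomial H (Finsupp.single l b)
    rw [hmod, add_zero] at this
    rw [X_pow_eq_monomial]; exact this.symm
  have hGc : ∀ x, coeff x G = coeff (x + Finsupp.single l b) H := by
    intro x; rw [hGdef, coeff_divMonomial, add_comm]
  have hG0 : G ≠ 0 := by rintro h; rw [h, mul_zero] at hG; exact h0 hG
  rw [hG] at hk
  obtain ⟨hb, hk2⟩ := DD_pow_of_X_pow_mul l G hG0 b (k + 1) hk
  refine ⟨by omega, RR l G, ?_, ?_⟩
  · rw [DD_pow_RR, sub_pow_apply_eq_zero]
    · ext x; rw [coeff_RR]; simp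
    · rw [show k - b + 1 = k + 1 - b by omega]; exact hk2
    · apply PD_pow_eq_zero
      intro x hx
      rw [hGc, hhi]
      simp; omega
  · intro x; rw [coeff_RR, hGc]

lemma DD_main (F : MvPolynomial ι ℂ) (b e : ι →₀ ℕ) (hF : DD ι F = 0)
    (he : ∀ x ∈ F.support, x ≤ e) (hb : b ∈ F.support)
    (hmin : ∀ x ∈ F.support, x = b ∨ ∃ j, b j < x j ∧ ∀ i < j, x i = b i) (l : ι) :
    ∑ j with j ≤ l, b j ≤ ∑ j with j < l, (e j - b j) := by
  classical
  have main : ∀ s : Finset ι, IsLowerSet (s : Set ι) → ∃ (k : ℕ) (H : MvPolynomial ι ℂ),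
      (∀ a ∈ s, ∑ j with j ≤ a, b j ≤ ∑ j with j < a, (e j - b j)) ∧
      k + ∑ j ∈ s, b j = ∑ j ∈ s, (e j - b j) ∧ (DD ι ^ (k + 1)) H = 0 ∧
      ∀ x, coeff x H = if ∀ j ∈ s, x j = 0 then coeff (x + b.filter (· ∈ s)) F else 0 := by
    intro s
    induction s using Finset.induction_on_max with
    | empty =>
      intro _
      refine ⟨0, F, by simp, by simp, by simpa using hF, ?_⟩
      intro x
      have : b.filter (· ∈ (∅ : Finset ι)) = 0 := by ext; simp
      rw [this]; simp
    | insert a s has ih =>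
      intro hlow
      have hs : IsLowerSet (s : Set ι) := by
        intro x y hyx hx
        have h1 := hlow hyx (by simp at hx; simp [hx])
        have h2 := has x hx
        simp only [coe_insert, Set.mem_insert_iff, mem_coe] at h1
        rcases h1 with h1 | h1
        · subst h1; exact absurd h2 (not_lt.2 hyx)
        · exact h1
      have hlt : ∀ i, i < a → i ∈ s := by
        intro i hi
        have := hlow hi.le (by simp : a ∈ ((insert a s : Finset ι) : Set ι))
        simp only [coe_insert, Set.mem_insert_iff, mem_coe] at this
        exact this.resolve_left hi.ne
      have hna : a ∉ s := fun h => lt_irrefl _ (has a h)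
      obtain ⟨k, H, h00, h1, h2, h3⟩ := ih hs
      have hfa : (b.filter (· ∈ s)) a = 0 := Finsupp.filter_apply_neg _ _ hna
      have hsupp : ∀ x, coeff x H ≠ 0 → (∀ j ∈ s, x j = 0) ∧ x + b.filter (· ∈ s) ∈ F.support := by
        intro x hx
        rw [h3] at hx
        by_cases hc : ∀ j ∈ s, x j = 0
        · rw [if_pos hc] at hx
          exact ⟨hc, mem_support_iff.2 hx⟩
        · rw [if_neg hc] at hx; exact absurd rfl hx
      have hstep := DD_step a H (b a) (e a) k h2 ?_ ?_ ?_ (he b hb a)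
      · obtain ⟨hbk, H', h4, h5⟩ := hstep
        refine ⟨(k - b a) + (e a - b a), H', ?_, ?_, h4, ?_⟩
        · intro a' ha'
          rcases mem_insert.1 ha' with rfl | ha'
          · have e1 : ({j | j < a'} : Finset ι) = s := by
              ext j; simp only [mem_filter, mem_univ, true_and]
              exact ⟨hlt j, has j⟩
            have e2 : ({j | j ≤ a'} : Finset ι) = insert a' s := by
              rw [← e1]; ext j; simp [le_iff_eq_or_lt]
            rw [e1, e2, sum_insert hna]; omega
          · exact h00 a' ha'
        · rw [sum_insert hna, sum_insert hna]; omega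
        · intro x
          rw [h5]
          by_cases hx : x a = 0
          · rw [if_pos hx, h3]
            refine if_congr ?_ ?_ rfl
            · simp only [mem_insert, forall_eq_or_imp, hx, true_and]
              refine forall₂_congr fun j hj => ?_
              rw [Finsupp.add_apply, Finsupp.single_eq_of_ne (by rintro rfl; exact hna hj), add_zero]
            · congr 1
              rw [add_assoc]
              congr 1
              ext j
              rw [Finsupp.add_apply, Finsupp.filter_apply, Finsupp.filter_apply]
              by_cases hj : j = a
              · subst hj; simp [hna]
              · simp [hj, Finsupp.single_eq_of_ne hj]
          · rw [if_neg hx, if_neg]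
            intro h
            exact hx (h a (mem_insert_self _ _))
      · intro x hx
        by_contra hc
        obtain ⟨g1, g2⟩ := hsupp x hc
        have hag : ∀ i ∈ s, (x + b.filter (· ∈ s)) i = b i := by
          intro i hi
          rw [Finsupp.add_apply, Finsupp.filter_apply_pos _ _ hi, g1 i hi, zero_add]
        have haa : (x + b.filter (· ∈ s)) a = x a := by rw [Finsupp.add_apply, hfa, add_zero]
        rcases hmin _ g2 with g | ⟨j, g, g'⟩
        · rw [← haa, g] at hx; exact lt_irrefl _ hx
        · rcases lt_trichotomy j a with hj | hj | hj
          · rw [hag j (hlt j hj)] at g; exact lt_irrefl _ g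
          · subst hj; omega
          · have := g' a hj; omega
      · intro x hx
        by_contra hc
        obtain ⟨g1, g2⟩ := hsupp x hc
        have := he _ g2 a
        rw [Finsupp.add_apply, hfa] at this
        omega
      · intro hH
        have := h3 (b.filter (¬ · ∈ s))
        rw [hH, coeff_zero, if_pos, add_comm, Finsupp.filter_add_filter_not] at this
        · exact mem_support_iff.1 hb this.symm
        · intro j hj; simp [hj]
  obtain ⟨_, _, h, _⟩ := main univ (by intro x y _ _; simp)
  exact h l (mem_univ _)
end


section
open MvPolynomial

lemma deriv_zero {σ ι : Type} [Fintype ι] (u v : ι → σ) (f : MvPolynomial σ ℂ)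
    (h : ∀ t : ℂ, aeval (fun w => X w + C t * ∑ l, X (u l) * pderiv (v l) (X w)) f = f) :
    ∑ l, X (u l) * pderiv (v l) f = 0 := by
  classical
  let Φ : MvPolynomial σ ℂ →ₐ[ℂ] Polynomial (MvPolynomial σ ℂ) :=
    aeval (fun w => Polynomial.C (X w) + Polynomial.X * Polynomial.C (∑ l, X (u l) * pderiv (v l) (X w)))
  have hX : ∀ w, Φ (X w) = Polynomial.C (X w) +
      Polynomial.X * Polynomial.C (∑ l, X (u l) * pderiv (v l) (X w)) := fun w => by simp [Φ]
  have hC : ∀ a, Φ (C a) = Polynomial.C (C a) := by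
    intro a
    have : Φ (C a) = algebraMap ℂ _ a := by simp [Φ]
    rw [this]; rfl
  have hco : ∀ p, (Φ p).coeff 0 = p ∧ (Φ p).coeff 1 = ∑ l, X (u l) * pderiv (v l) p := by
    intro p
    induction p using MvPolynomial.induction_on with
    | C a => rw [hC]; simp [Polynomial.coeff_C]
    | add p q hp hq =>
      rw [map_add, Polynomial.coeff_add, Polynomial.coeff_add, hp.1, hp.2, hq.1, hq.2]
      refine ⟨rfl, ?_⟩
      simp [mul_add, sum_add_distrib]
    | mul_X p w hp =>
      rw [map_mul, hX]
      constructor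
      · rw [Polynomial.mul_coeff_zero, hp.1]; simp
      · rw [mul_add, Polynomial.coeff_add, Polynomial.coeff_mul_C, hp.2, ← mul_assoc,
          Polynomial.coeff_mul_C, Polynomial.coeff_mul_X, hp.1, sum_mul, mul_sum, ← sum_add_distrib]
        refine sum_congr rfl fun l _ => ?_
        rw [pderiv_mul]; ring
  have hev : ∀ t : ℂ, (Φ f).eval (C t) = f := by
    intro t
    have : ∀ p, (Φ p).eval (C t) = aeval (fun w => X w + C t * ∑ l, X (u l) * pderiv (v l) (X w)) p := by
      intro p
      induction p using MvPolynomial.induction_on with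
      | C a => rw [hC]; simp
      | add p q hp hq => rw [map_add, map_add, Polynomial.eval_add, hp, hq]
      | mul_X p w hp =>
        rw [map_mul, map_mul, Polynomial.eval_mul, hp, hX, aeval_X, Polynomial.eval_add, Polynomial.eval_mul,
          Polynomial.eval_C, Polynomial.eval_C, Polynomial.eval_X]
    rw [this, h]
  have heq : Φ f = Polynomial.C f := by
    apply Polynomial.eq_of_infinite_eval_eq
    refine Set.Infinite.mono (s := Set.range (C : ℂ → MvPolynomial σ ℂ)) ?_
      (Set.infinite_range_of_injective (C_injective _ _))
    rintro _ ⟨t, rfl⟩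
    simp [hev]
  rw [← (hco f).2, heq, Polynomial.coeff_C_of_ne_zero one_ne_zero]

lemma ineq_of_deriv {K r0 r1 : ℕ} {ι : Type} [LinearOrder ι] [Fintype ι] (u v : ι → KVar K r0 r1)
    (hu : Function.Injective u) (hv : Function.Injective v) (huv : ∀ i j, u i ≠ v j)
    (hgu : ∀ i j, i < j → VarGT (u i) (u j)) (hguv : ∀ i, VarGT (u i) (v i))
    (f : KPoly K r0 r1) (m0 : KVar K r0 r1 →₀ ℕ) (hm0 : IsLM f m0)
    (hD : ∑ l, X (u l) * pderiv (v l) f = 0) (l : ι) :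
    ∑ j with j ≤ l, m0 (v j) ≤ ∑ j with j < l, m0 (u j) := by
  classical
  let e : ι →₀ ℕ := Finsupp.equivFunOnFinite.symm fun j => m0 (u j) + m0 (v j)
  let b0 : ι →₀ ℕ := Finsupp.equivFunOnFinite.symm fun j => m0 (v j)
  have he : ∀ j, e j = m0 (u j) + m0 (v j) := fun j => rfl
  have hb0 : ∀ j, b0 j = m0 (v j) := fun j => rfl
  let M : (ι →₀ ℕ) → (KVar K r0 r1 →₀ ℕ) := fun b => Finsupp.equivFunOnFinite.symm
    (Function.extend u (fun j => e j - b j) (Function.extend v b m0))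
  have hM : ∀ b w, M b w = Function.extend u (fun j => e j - b j) (Function.extend v b m0) w :=
    fun b w => rfl
  have hMu : ∀ b j, M b (u j) = e j - b j := fun b j => by
    rw [hM]; exact hu.extend_apply _ _ j
  have hMv : ∀ b j, M b (v j) = b j := by
    intro b j
    have : M b (v j) = Function.extend v b m0 (v j) := by
      rw [hM]; exact Function.extend_apply' _ _ _ (by rintro ⟨i, hi⟩; exact huv i j hi)
    rw [this, hv.extend_apply]
  have hMo : ∀ b w, (∀ j, u j ≠ w) → (∀ j, v j ≠ w) → M b w = m0 w := by
    intro b w h1 h2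
    have : M b w = Function.extend v b m0 w := by
      rw [hM]; exact Function.extend_apply' _ _ _ (by rintro ⟨i, hi⟩; exact h1 i hi)
    rw [this, Function.extend_apply' _ _ _ (by rintro ⟨i, hi⟩; exact h2 i hi)]
  have hext : ∀ (b : ι →₀ ℕ) (m : KVar K r0 r1 →₀ ℕ), (∀ j, e j - b j = m (u j)) → (∀ j, b j = m (v j)) →
      (∀ w, (∀ j, u j ≠ w) → (∀ j, v j ≠ w) → m0 w = m w) → M b = m := by
    intro b m h1 h2 h3
    ext w
    by_cases hw : ∃ j, u j = w
    · obtain ⟨j, rfl⟩ := hw; rw [hMu, h1]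
    by_cases hw' : ∃ j, v j = w
    · obtain ⟨j, rfl⟩ := hw'; rw [hMv, h2]
    push Not at hw hw'
    rw [hMo b w hw hw', h3 w hw hw']
  let F : MvPolynomial ι ℂ := ∑ b ∈ Finset.Icc 0 e, monomial b (coeff (M b) f)
  have hF : ∀ x, coeff x F = if x ≤ e then coeff (M x) f else 0 := by
    intro x
    simp only [F, coeff_sum, coeff_monomial]
    rw [Finset.sum_ite_eq']
    simp
  have hsF : ∀ x ∈ F.support, x ≤ e ∧ M x ∈ f.support := by
    intro x hx
    rw [mem_support_iff, hF] at hx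
    by_cases h : x ≤ e
    · rw [if_pos h] at hx; exact ⟨h, mem_support_iff.2 hx⟩
    · rw [if_neg h] at hx; exact absurd rfl hx
  have hMb0 : M b0 = m0 := hext b0 m0 (fun j => by rw [he, hb0]; omega) (fun j => rfl) (fun _ _ _ => rfl)
  have key := DD_main F b0 e ?_ (fun x hx => (hsF x hx).1) ?_ ?_ l
  · calc _ ≤ _ := key
      _ = _ := sum_congr rfl fun j _ => by rw [he, hb0]; omega
  · ext x
    rw [coeff_DD, coeff_zero]
    by_cases hx : x ≤ e
    · have h1 := congrArg (coeff (M x)) hD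
      rw [coeff_zero, coeff_sum] at h1
      rw [← h1]
      refine sum_congr rfl fun j _ => ?_
      rw [coeff_X_mul', hF]
      have hsup : u j ∈ (M x).support ↔ x + Finsupp.single j 1 ≤ e := by
        rw [Finsupp.mem_support_iff, hMu]
        constructor
        · intro h i
          have := hx i
          rw [Finsupp.add_apply]
          by_cases hij : i = j
          · subst hij; simp; omega
          · rw [Finsupp.single_eq_of_ne hij]; omega
        · intro h
          have := h j
          simp at this; omega
      by_cases hs : x + Finsupp.single j 1 ≤ e
      · rw [if_pos hs, if_pos (hsup.2 hs), coeff_pderiv]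
        have hsv : (M x - Finsupp.single (u j) 1 : KVar K r0 r1 →₀ ℕ) (v j) = x j := by
          rw [Finsupp.tsub_apply, hMv, Finsupp.single_eq_of_ne (huv j j).symm]; rfl
        rw [hsv]
        congr 2
        apply hext
        · intro i
          rw [Finsupp.add_apply, Finsupp.add_apply, Finsupp.tsub_apply, hMu,
            Finsupp.single_eq_of_ne (huv i j)]
          by_cases hij : i = j
          · subst hij; simp; omega
          · rw [Finsupp.single_eq_of_ne hij, Finsupp.single_eq_of_ne (fun h => hij (hu h))]; omega
        · intro i
          rw [Finsupp.add_apply, Finsupp.add_apply, Finsupp.tsub_apply, hMv,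
            Finsupp.single_eq_of_ne (huv j i).symm]
          by_cases hij : i = j
          · subst hij; simp
          · rw [Finsupp.single_eq_of_ne hij, Finsupp.single_eq_of_ne (fun h => hij (hv h))]; omega
        · intro w h2 h3
          rw [Finsupp.add_apply, Finsupp.tsub_apply, hMo x w h2 h3, Finsupp.single_eq_of_ne (h2 j).symm,
            Finsupp.single_eq_of_ne (h3 j).symm]; rfl
      · rw [if_neg hs, if_neg (fun h => hs (hsup.1 h)), zero_mul]
    · refine sum_eq_zero fun j _ => ?_
      rw [hF, if_neg, zero_mul]
      intro h
      exact hx (le_trans le_self_add h)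
  · rw [mem_support_iff, hF, if_pos, hMb0]
    · exact mem_support_iff.1 hm0.1
    · intro j; rw [he, hb0]; omega
  · intro x hx
    obtain ⟨hxe, hxf⟩ := hsF x hx
    rcases hm0.2 _ hxf with h | ⟨w, hw1, hw2⟩
    · left
      ext j; rw [← hMv x j, h, hb0]
    · right
      have hxe' := fun j => hxe j
      by_cases hw : ∃ j, u j = w
      · obtain ⟨j, rfl⟩ := hw
        refine ⟨j, ?_, ?_⟩
        · rw [hMu, he] at hw1; rw [hb0]; have := hxe j; rw [he] at this; omega
        · intro i hij
          have := hw2 _ (hgu i j hij)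
          rw [hMu, he] at this; rw [hb0]; have := hxe i; rw [he] at this; omega
      by_cases hw' : ∃ j, v j = w
      · obtain ⟨j, rfl⟩ := hw'
        have := hw2 _ (hguv j)
        rw [hMu, he] at this; rw [hMv] at hw1; have := hxe j; rw [he] at this; omega
      push Not at hw hw'
      rw [hMo x w hw hw'] at hw1
      exact absurd hw1 (lt_irrefl _)

end


section
open MvPolynomial
variable {K r0 r1 : ℕ}

lemma glAct_X (g : Matrix (Fin r0) (Fin r0) ℂ) (h : Matrix (Fin r1) (Fin r1) ℂ) (v : KVar K r0 r1) :
    glAct g h (X v) = ∑ j' : Fin r1, ∑ k' : Fin r0,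
      C (h⁻¹ v.2.1 j' * g k' v.2.2) * X (v.1, j', k') := by
  simp only [glAct, aeval_X]

lemma glAct_eq_of_mem (f : KPoly K r0 r1) (hf : f ∈ semiInvariantRing K r0 r1)
    (g : Matrix (Fin r0) (Fin r0) ℂ) (h : Matrix (Fin r1) (Fin r1) ℂ) (hg : g.det = 1) (hh : h.det = 1) :
    glAct g h f = f := by
  unfold semiInvariantRing at hf
  induction hf using Submodule.span_induction with
  | mem f hf =>
    obtain ⟨w0, w1, hw⟩ := hf
    rw [hw g h (by rw [hg]; exact isUnit_one) (by rw [hh]; exact isUnit_one), hg, hh]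
    simp
  | zero => simp
  | add x y _ _ hx hy => rw [map_add, hx, hy]
  | smul a x _ hx => rw [map_smul, hx]

lemma deriv_M (f : KPoly K r0 r1) (hf : f ∈ semiInvariantRing K r0 r1) (p p' : Fin r0) (hp : p ≠ p') :
    ∑ a : Fin K ×ₗ Fin r1, X ((ofLex a).1, (ofLex a).2, p) *
      pderiv ((ofLex a).1, (ofLex a).2, p') f = 0 := by
  classical
  apply deriv_zero (fun a : Fin K ×ₗ Fin r1 => ((ofLex a).1, (ofLex a).2, p))
    (fun a => ((ofLex a).1, (ofLex a).2, p'))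
  intro t
  have h1 := glAct_eq_of_mem f hf (Matrix.transvection p p' t) 1
    (Matrix.det_transvection_of_ne p p' hp t) Matrix.det_one
  have h2 : glAct (K := K) (Matrix.transvection p p' t) (1 : Matrix (Fin r1) (Fin r1) ℂ) =
      aeval (fun w => X w + C t * ∑ a : Fin K ×ₗ Fin r1, X ((ofLex a).1, (ofLex a).2, p) *
        pderiv ((ofLex a).1, (ofLex a).2, p') (X w)) := by
    apply algHom_ext
    rintro ⟨i, q, k⟩
    rw [glAct_X, aeval_X, inv_one]
    have e1 : ∑ a : Fin K ×ₗ Fin r1, X ((ofLex a).1, (ofLex a).2, p) *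
        pderiv ((ofLex a).1, (ofLex a).2, p') (X (i, q, k) : KPoly K r0 r1) =
        if k = p' then X (i, q, p) else 0 := by
      rw [Finset.sum_eq_single (toLex (i, q))]
      · rw [pderiv_X]
        by_cases hk : k = p'
        · subst hk; simp
        · rw [if_neg hk, Pi.single_eq_of_ne, mul_zero]
          simp [hk]
      · intro a _ ha
        rw [pderiv_X, Pi.single_eq_of_ne, mul_zero]
        intro h
        apply ha
        rw [Prod.mk.injEq, Prod.mk.injEq] at h
        rw [h.1, h.2.1]; rfl
      · simp
    rw [e1, Finset.sum_eq_single q]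
    · simp only [Matrix.one_apply_eq, one_mul, Matrix.transvection, Matrix.add_apply, Matrix.one_apply,
        Matrix.single_apply, C_add, add_mul, sum_add_distrib]
      congr 1
      · simp
      · by_cases hk : k = p'
        · subst hk
          simp
          rw [Finset.sum_eq_single p]
          · simp
          · intro x _ hx
            simp [Ne.symm hx]
          · simp
        · simp [hk, Ne.symm hk]
    · intro j _ hj
      simp [Matrix.one_apply_ne (Ne.symm hj)]
    · simp
  rw [← h2, h1]

lemma deriv_P (f : KPoly K r0 r1) (hf : f ∈ semiInvariantRing K r0 r1) (q q' : Fin r1) (hq : q ≠ q') :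
    ∑ a : Fin K ×ₗ Fin r0, X ((ofLex a).1, q, (ofLex a).2) *
      pderiv ((ofLex a).1, q', (ofLex a).2) f = 0 := by
  classical
  apply deriv_zero (fun a : Fin K ×ₗ Fin r0 => ((ofLex a).1, q, (ofLex a).2))
    (fun a => ((ofLex a).1, q', (ofLex a).2))
  intro t
  have h1 := glAct_eq_of_mem f hf 1 (Matrix.transvection q' q (-t)) Matrix.det_one
    (Matrix.det_transvection_of_ne q' q hq.symm (-t))
  have hinv : (Matrix.transvection q' q (-t))⁻¹ = Matrix.transvection q' q t := by
    apply Matrix.inv_eq_right_inv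
    rw [Matrix.transvection_mul_transvection_same _ _ hq.symm, neg_add_cancel, Matrix.transvection_zero]
  have h2 : glAct (K := K) (1 : Matrix (Fin r0) (Fin r0) ℂ) (Matrix.transvection q' q (-t)) =
      aeval (fun w => X w + C t * ∑ a : Fin K ×ₗ Fin r0, X ((ofLex a).1, q, (ofLex a).2) *
        pderiv ((ofLex a).1, q', (ofLex a).2) (X w)) := by
    apply algHom_ext
    rintro ⟨i, j, k⟩
    rw [glAct_X, aeval_X, hinv]
    have e1 : ∑ a : Fin K ×ₗ Fin r0, X ((ofLex a).1, q, (ofLex a).2) *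
        pderiv ((ofLex a).1, q', (ofLex a).2) (X (i, j, k) : KPoly K r0 r1) =
        if j = q' then X (i, q, k) else 0 := by
      rw [Finset.sum_eq_single (toLex (i, k))]
      · rw [pderiv_X]
        by_cases hk : j = q'
        · subst hk; simp
        · rw [if_neg hk, Pi.single_eq_of_ne, mul_zero]
          simp [hk]
      · intro a _ ha
        rw [pderiv_X, Pi.single_eq_of_ne, mul_zero]
        intro h
        apply ha
        rw [Prod.mk.injEq, Prod.mk.injEq] at h
        rw [h.1, h.2.2]; rfl
      · simp
    rw [e1, sum_comm, Finset.sum_eq_single k]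
    · simp only [Matrix.one_apply_eq, mul_one, Matrix.transvection, Matrix.add_apply, Matrix.one_apply,
        Matrix.single_apply, C_add, add_mul, sum_add_distrib]
      congr 1
      · simp
      · by_cases hk : j = q'
        · subst hk
          simp
          rw [Finset.sum_eq_single q]
          · simp
          · intro x _ hx
            simp [Ne.symm hx]
          · simp
        · simp [hk, Ne.symm hk]
    · intro k' _ hk'
      simp [Matrix.one_apply_ne hk']
    · simp
  rw [← h2, h1]

lemma coeff_scale (c : KVar K r0 r1 → ℂ) (f : KPoly K r0 r1) (m : KVar K r0 r1 →₀ ℕ) :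
    coeff m (aeval (fun v => C (c v) * X v : KVar K r0 r1 → KPoly K r0 r1) f) =
      (∏ v, c v ^ m v) * coeff m f := by
  classical
  induction f using MvPolynomial.induction_on' with
  | add p q hp hq => rw [map_add, coeff_add, hp, hq, coeff_add, mul_add]
  | monomial n a =>
    have : aeval (fun v => C (c v) * X v : KVar K r0 r1 → KPoly K r0 r1) (monomial n a) =
        monomial n ((∏ v, c v ^ n v) * a) := by
      rw [aeval_monomial, Finsupp.prod_fintype _ _ (fun _ => pow_zero _)]
      simp only [mul_pow, prod_mul_distrib, ← C_pow]
      rw [monomial_eq (s := n), Finsupp.prod_fintype _ _ (fun _ => pow_zero _), ← map_prod, C_mul,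
        algebraMap_eq]
      ring
    rw [this, coeff_monomial, coeff_monomial]
    split_ifs with h
    · rw [h]
    · rw [mul_zero]

lemma glAct_diag (a : Fin r0 → ℂ) (b : Fin r1 → ℂ) (h : Matrix (Fin r1) (Fin r1) ℂ)
    (hh : h⁻¹ = Matrix.diagonal b) :
    glAct (K := K) (Matrix.diagonal a) h = aeval (fun v => C (b v.2.1 * a v.2.2) * X v) := by
  classical
  apply algHom_ext
  rintro ⟨i, j, k⟩
  rw [glAct_X, aeval_X, hh, Finset.sum_eq_single j, Finset.sum_eq_single k]
  · simp
  · intro k' _ hk; simp [Matrix.diagonal_apply_ne _ hk]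
  · simp
  · intro j' _ hj; simp [Matrix.diagonal_apply_ne _ (Ne.symm hj)]
  · simp

lemma prod_ite_pow (m : KVar K r0 r1 →₀ ℕ) (S : KVar K r0 r1 → Prop) [DecidablePred S] :
    ∏ v, (if S v then (2 : ℂ) else 1) ^ m v = ((2 ^ (∑ v with S v, m v) : ℕ) : ℂ) := by
  rw [← prod_pow_eq_pow_sum, prod_filter]
  push_cast
  refine prod_congr rfl fun v _ => ?_
  split_ifs <;> simp

lemma weight_M (f : KPoly K r0 r1) (w0 w1 : ℤ) (hf : IsSemiInvariant f w0 w1)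
    (m : KVar K r0 r1 →₀ ℕ) (hm : m ∈ f.support) (p p' : Fin r0) :
    ∑ v with v.2.2 = p, m v = ∑ v with v.2.2 = p', m v := by
  classical
  have key : ∀ p : Fin r0, ((2 ^ (∑ v with v.2.2 = p, m v) : ℕ) : ℂ) = (2 : ℂ) ^ w0 := by
    intro p
    have hdet : (Matrix.diagonal (fun k : Fin r0 => if k = p then (2 : ℂ) else 1)).det = 2 := by
      rw [Matrix.det_diagonal]; simp
    have h1 := hf (Matrix.diagonal (fun k => if k = p then 2 else 1)) 1
      (by rw [hdet]; exact isUnit_iff_ne_zero.2 two_ne_zero) (by simp)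
    rw [glAct_diag _ (fun _ => 1) 1 (by rw [inv_one, Matrix.diagonal_one]), hdet] at h1
    have h2 := congrArg (coeff m) h1
    rw [coeff_scale, coeff_C_mul, Matrix.det_one, one_zpow, mul_one] at h2
    have h3 := mul_right_cancel₀ (mem_support_iff.1 hm) h2
    rw [← h3, ← prod_ite_pow m (fun v => v.2.2 = p)]
    simp
  have := (key p).trans (key p').symm
  have h4 : 2 ^ (∑ v with v.2.2 = p, m v) = 2 ^ (∑ v with v.2.2 = p', m v) := by exact_mod_cast this
  exact Nat.pow_right_injective le_rfl h4

lemma weight_P (f : KPoly K r0 r1) (w0 w1 : ℤ) (hf : IsSemiInvariant f w0 w1)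
    (m : KVar K r0 r1 →₀ ℕ) (hm : m ∈ f.support) (p p' : Fin r1) :
    ∑ v with v.2.1 = p, m v = ∑ v with v.2.1 = p', m v := by
  classical
  have key : ∀ p : Fin r1, ((2 ^ (∑ v with v.2.1 = p, m v) : ℕ) : ℂ) = (2⁻¹ : ℂ) ^ w1 := by
    intro p
    have hdet : (Matrix.diagonal (fun k : Fin r1 => if k = p then (2⁻¹ : ℂ) else 1)).det = 2⁻¹ := by
      rw [Matrix.det_diagonal]; simp
    have h1 := hf 1 (Matrix.diagonal (fun k => if k = p then 2⁻¹ else 1)) (by simp)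
      (by rw [hdet]; exact isUnit_iff_ne_zero.2 (inv_ne_zero two_ne_zero))
    rw [← Matrix.diagonal_one, glAct_diag _ (fun k => if k = p then 2 else 1) _ (by
      apply Matrix.inv_eq_right_inv
      rw [Matrix.diagonal_mul_diagonal, ← Matrix.diagonal_one]
      congr 1
      ext k
      split_ifs <;> simp), hdet] at h1
    have h2 := congrArg (coeff m) h1
    rw [coeff_scale, coeff_C_mul, Matrix.diagonal_one, Matrix.det_one, one_zpow, one_mul] at h2
    have h3 := mul_right_cancel₀ (mem_support_iff.1 hm) h2
    rw [← h3, ← prod_ite_pow m (fun v => v.2.1 = p)]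
    simp
  have := (key p).trans (key p').symm
  have h4 : 2 ^ (∑ v with v.2.1 = p, m v) = 2 ^ (∑ v with v.2.1 = p', m v) := by exact_mod_cast this
  exact Nat.pow_right_injective le_rfl h4

lemma weights (f : KPoly K r0 r1) (hf : f ∈ semiInvariantRing K r0 r1) :
    ∀ m ∈ f.support, (∀ p p' : Fin r0, ∑ v with v.2.2 = p, m v = ∑ v with v.2.2 = p', m v) ∧
      (∀ q q' : Fin r1, ∑ v with v.2.1 = q, m v = ∑ v with v.2.1 = q', m v) := by
  classical
  unfold semiInvariantRing at hf
  induction hf using Submodule.span_induction with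
  | mem f hf =>
    obtain ⟨w0, w1, hw⟩ := hf
    exact fun m hm => ⟨weight_M f w0 w1 hw m hm, weight_P f w0 w1 hw m hm⟩
  | zero => simp
  | add x y _ _ hx hy =>
    intro m hm
    rcases Finset.mem_union.1 (support_add hm) with h | h
    · exact hx m h
    · exact hy m h
  | smul a x _ hx => exact fun m hm => hx m (support_smul hm)

lemma sum_lex_M (m : KVar K r0 r1 →₀ ℕ) (p : Fin r0) :
    ∑ a : Fin K ×ₗ Fin r1, m ((ofLex a).1, (ofLex a).2, p) = ∑ v with v.2.2 = p, m v := by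
  refine Finset.sum_bij (fun a _ => ((ofLex a).1, (ofLex a).2, p)) ?_ ?_ ?_ ?_
  · simp
  · intro a _ b _ h
    rw [Prod.mk.injEq, Prod.mk.injEq] at h
    exact ofLex.injective (Prod.ext h.1 h.2.1)
  · rintro ⟨i, q, k⟩ h
    simp only [mem_filter, mem_univ, true_and] at h
    subst h
    exact ⟨toLex (i, q), mem_univ _, rfl⟩
  · intros; rfl

lemma sum_lex_P (m : KVar K r0 r1 →₀ ℕ) (q : Fin r1) :
    ∑ a : Fin K ×ₗ Fin r0, m ((ofLex a).1, q, (ofLex a).2) = ∑ v with v.2.1 = q, m v := by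
  refine Finset.sum_bij (fun a _ => ((ofLex a).1, q, (ofLex a).2)) ?_ ?_ ?_ ?_
  · simp
  · intro a _ b _ h
    rw [Prod.mk.injEq, Prod.mk.injEq] at h
    exact ofLex.injective (Prod.ext h.1 h.2.2)
  · rintro ⟨i, j, k⟩ h
    simp only [mem_filter, mem_univ, true_and] at h
    subst h
    exact ⟨toLex (i, k), mem_univ _, rfl⟩
  · intros; rfl

/-- Leading monomials of elements of the semi-invariant ring come from semi-standard pairs. -/
lemma exists_pair_of_LM (h0 : 1 ≤ r0) (h1 : 1 ≤ r1)
    (f : KPoly K r0 r1) (hf : f ∈ semiInvariantRing K r0 r1)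
    (mo : KVar K r0 r1 →₀ ℕ) (hmo : IsLM f mo) :
    ∃ (cm cp : ℕ) (L : LinkedPair K r0 r1 cm cp), IsSemiStandardPair L ∧ monExpM L = mo := by
  obtain ⟨w0, w1⟩ := weights f hf mo hmo.1
  refine ⟨_, _, exists_pair mo _ _ (fun p => (sum_lex_M mo p).trans (w0 p ⟨0, h0⟩))
    (fun q => (sum_lex_P mo q).trans (w1 q ⟨0, h1⟩)) ?_ ?_⟩
  · intro p p' hp a
    have hne : p ≠ p' := by rintro rfl; omega
    refine ineq_of_deriv (fun a : Fin K ×ₗ Fin r1 => ((ofLex a).1, (ofLex a).2, p))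
      (fun a => ((ofLex a).1, (ofLex a).2, p')) ?_ ?_ ?_ ?_ ?_ f mo hmo (deriv_M f hf p p' hne) a
    · intro a b h
      rw [Prod.mk.injEq, Prod.mk.injEq] at h
      exact ofLex.injective (Prod.ext h.1 h.2.1)
    · intro a b h
      rw [Prod.mk.injEq, Prod.mk.injEq] at h
      exact ofLex.injective (Prod.ext h.1 h.2.1)
    · intro a b h
      rw [Prod.mk.injEq, Prod.mk.injEq] at h
      exact hne h.2.2
    · intro a b h
      rw [Prod.Lex.lt_iff] at h
      rcases h with h | ⟨h, h'⟩
      · exact Or.inl h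
      · exact Or.inr ⟨h, Or.inl h'⟩
    · intro a
      refine Or.inr ⟨rfl, Or.inr ⟨rfl, ?_⟩⟩
      rw [Fin.lt_def]; simp only; omega
  · intro p p' hp a
    have hne : p ≠ p' := by rintro rfl; omega
    refine ineq_of_deriv (fun a : Fin K ×ₗ Fin r0 => ((ofLex a).1, p, (ofLex a).2))
      (fun a => ((ofLex a).1, p', (ofLex a).2)) ?_ ?_ ?_ ?_ ?_ f mo hmo (deriv_P f hf p p' hne) a
    · intro a b h
      rw [Prod.mk.injEq, Prod.mk.injEq] at h
      exact ofLex.injective (Prod.ext h.1 h.2.2)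
    · intro a b h
      rw [Prod.mk.injEq, Prod.mk.injEq] at h
      exact ofLex.injective (Prod.ext h.1 h.2.2)
    · intro a b h
      rw [Prod.mk.injEq, Prod.mk.injEq] at h
      exact hne h.2.1
    · intro a b h
      rw [Prod.Lex.lt_iff] at h
      rcases h with h | ⟨h, h'⟩
      · exact Or.inl h
      · exact Or.inr ⟨h, Or.inr ⟨rfl, h'⟩⟩
    · intro a
      refine Or.inr ⟨rfl, Or.inl ?_⟩
      rw [Fin.lt_def]; simp only; omega
end


end

/-- The semi-invariants attached to primitive semi-standard
linked tableaux pairs form a (possibly infinite) SAGBI basis of the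
semi-invariant ring: the leading monomial of every nonzero element of the
semi-invariant ring is a finite product of leading monomials of semi-invariants
of primitive semi-standard linked tableaux pairs. -/
theorem statement12 (K r0 r1 : ℕ) (hK : 1 ≤ K) (h0 : 1 ≤ r0) (h1 : 1 ≤ r1)
    (f : KPoly K r0 r1) (hf : f ∈ semiInvariantRing K r0 r1) (hf0 : f ≠ 0)
    (mo : KVar K r0 r1 →₀ ℕ) (hmo : IsLM f mo) :
    ∃ (n : ℕ) (sh : Fin n → ℕ × ℕ)
      (Ls : (i : Fin n) → LinkedPair K r0 r1 (sh i).1 (sh i).2)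
      (ms : Fin n → (KVar K r0 r1 →₀ ℕ)),
      (∀ i, IsPrimitive (Ls i)) ∧ (∀ i, IsLM (pairPoly (Ls i)) (ms i)) ∧
      mo = ∑ i, ms i := by
  obtain ⟨cm, cp, L, hL, hm⟩ := exists_pair_of_LM h0 h1 f hf mo hmo
  exact finish h0 L hL mo hm.symm
end QuiverSAGBI
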